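/- Let c₁, c₂ be real numbers with c₁c₂ ≠ 0 and |c₁² + c₂² − 1| = 2|c₁c₂|, let (c_n)_{n≥1} be the 2-periodic sequence with c_n = c₁ for odd n and c_n = c₂ for even n, and let λ be a real number with λ ≠ 1/2 and λ not a positive integer. Set a₀ = (c₁² + c₂² − 1)/(c₁c₂) (so a₀ = 2 or a₀ = −2), α = −a₀/2, and let δ₊ be the complex number 2·√((2λ−1)/(2c₁c₂)) if a₀ = 2 and 2·√((1−2λ)/(2c₁c₂)) if a₀ = −2 (principal complex square root), and δ₋ = −δ₊. Then there exist two linearly independent sequences u⁺, u⁻ : ℕ₊ → ℂ, each satisfying the three-term recurrence c_{n−1}(n−1)u_{n−1} + (n − λ)u_n + c_n n u_{n+1} = 0 for all n ≥ 2, such that as k → ∞: u^±_{2k−1} = α^k · exp(δ_± √k) · k^{−1/4} · (1 + r_k^±) and u^±_{2k} = −(c₁ + αc₂) · α^k · exp(δ_± √k) · k^{−1/4} · (1 + s_k^±), where the sequences r^± and s^± are O(1/√k). -/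

import Mathlib

/-!
On the critical lines the numbers `α = -a₀/2` and `β = c₁ + α c₂` satisfy `α² = β² = 1`. Put `p =
β c₁` and `q = β α c₂`, so that `p + q = 1` and `p q = α c₁ c₂`, and write `u_{2k-1} = α^k X_k`,
`u_{2k} = -β α^k Y_k`. The recurrence centred at even indices expresses `Y_k` through `X_k` and
`X_{k+1}` (here `λ ∉ ℕ₊` is used); inserting this into the recurrence centred at odd indices
leaves a scalar recurrence `P X_k + Q X_{k+1} + R X_{k+2} = 0` (`XRec`) whose coefficients are
rational in `s² = 1/(k+1)` and whose leading part is a multiple of the second difference.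

Let `E(x) = exp(δ √x) x^{-1/4}`. The ratios `E(x ± 1)/E(x)` are functions of `s = x^{-1/2}` with
an explicit third-order expansion at `s = 0`. When `p q δ² = 2 (1 - 2 λ)`, which is the value in
the theorem, the residual of `E` in the scalar recurrence is `O(s⁴) = O(k⁻²)` (`jet_residual`):
the choice of `δ` removes the `s²` term and the exponent `-1/4` removes the `s³` term. The
Casoratian of the two functions `E_δ`, `E_{-δ}` is only of relative order `s`, so a true solution
differs from `E` by relative increments of order `k^{-3/2}`, whose tails are `O(k^{-1/2})`.

Since `c₁`, `c₂`, `λ` are real, `δ` is either purely imaginary or real. The solution that is not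
dominated is constructed by variation of parameters and infinite backward products
(`exists_backward`, `exists_recessive`); this covers `-δ` always, and both signs when `Re δ = 0`.
For `δ > 0` the growing solution is obtained by forward iteration (`exists_forward`,
`exists_dominant`). Solutions constructed for large `k` extend back to `ℕ₊` because `c₁ c₂ ≠ 0`
(`exists_extension`), and the even-indexed asymptotics follow from those of `X` because `p + q =
1` (`evenPart_bound`).

Finally, a proportionality between the two solutions would make `exp(2 δ √k)` converge to a
nonzero limit, which is impossible for `δ ≠ 0`, that is, for `λ ≠ 1/2` (`no_limit`).
-/

section
open Asymptotics Filter Topology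

/-! ### Third-order expansions -/

/-- `f(s) = a + b s + c s² + d s³ + O(s⁴)` as the real variable `s` tends to `0`. -/
def Jet (f : ℝ → ℂ) (a b c d : ℂ) : Prop :=
  (fun s : ℝ => f s - (a + b * s + c * s ^ 2 + d * s ^ 3)) =O[𝓝 0] (fun s : ℝ => s ^ 4)

namespace Jet
variable {f g : ℝ → ℂ} {a b c d a' b' c' d' : ℂ}

lemma congr (h : Jet f a b c d) (hfg : ∀ᶠ s in 𝓝 0, f s = g s) : Jet g a b c d := by
  refine IsBigO.congr' h ?_ EventuallyEq.rfl
  filter_upwards [hfg] with s hs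
  rw [hs]

lemma cast (h : Jet f a b c d) (ha : a = a') (hb : b = b') (hc : c = c') (hd : d = d') :
    Jet f a' b' c' d' := by subst ha hb hc hd; exact h

lemma poly (a b c d : ℂ) : Jet (fun s => a + b * s + c * s ^ 2 + d * s ^ 3) a b c d := by
  simp only [Jet, sub_self]; exact isBigO_zero _ _

/-- A remainder `K(s) s⁴` with `K` continuous at `0` does not affect the jet. -/
lemma ofEq {K : ℝ → ℂ} (hK : ContinuousAt K 0)
    (h : ∀ᶠ s : ℝ in 𝓝 0, f s = a + b * s + c * s ^ 2 + d * s ^ 3 + K s * s ^ 4) :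
    Jet f a b c d := by
  have h1 : (fun s : ℝ => K s * ((s ^ 4 : ℝ) : ℂ)) =O[𝓝 0] (fun s : ℝ => (1:ℝ) * s ^ 4) := by
    refine IsBigO.mul (hK.norm.isBoundedUnder_le.isBigO_one ℝ) ?_
    exact IsBigO.of_bound 1 (by simp)
  refine IsBigO.congr' h1 ?_ (by simp)
  filter_upwards [h] with s hs
  rw [hs]; push_cast; ring

lemma add (hf : Jet f a b c d) (hg : Jet g a' b' c' d') :
    Jet (fun s => f s + g s) (a + a') (b + b') (c + c') (d + d') := by
  refine (IsBigO.add hf hg).congr' ?_ EventuallyEq.rfl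
  exact Eventually.of_forall fun s => by ring

lemma tendsto (hf : Jet f a b c d) : Tendsto f (𝓝 0) (𝓝 a) := by
  have h1 : Tendsto (fun s : ℝ => s ^ 4) (𝓝 0) (𝓝 0) := by
    have : ContinuousAt (fun s : ℝ => s ^ 4) 0 := by fun_prop
    simpa [ContinuousAt] using this
  have h2 := hf.trans_tendsto h1
  have h3 : Tendsto (fun s : ℝ => a + b * s + c * s ^ 2 + d * s ^ 3) (𝓝 0) (𝓝 a) := by
    have : ContinuousAt (fun s : ℝ => a + b * s + c * s ^ 2 + d * s ^ 3) 0 := by fun_prop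
    simpa [ContinuousAt] using this
  simpa using h2.add h3

lemma bdd (hf : Jet f a b c d) : f =O[𝓝 0] (fun _ : ℝ => (1 : ℝ)) :=
  hf.tendsto.norm.isBoundedUnder_le.isBigO_one ℝ

lemma mul (hf : Jet f a b c d) (hg : Jet g a' b' c' d') :
    Jet (fun s => f s * g s) (a * a') (a * b' + b * a') (a * c' + b * b' + c * a')
      (a * d' + b * c' + c * b' + d * a') := by
  have h1 := IsBigO.mul hf hg.bdd
  have h2 := IsBigO.mul (poly a b c d).bdd hg
  have h3 : Jet (fun s => (a + b * s + c * s ^ 2 + d * s ^ 3) *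
      (a' + b' * s + c' * s ^ 2 + d' * s ^ 3)) (a * a') (a * b' + b * a')
      (a * c' + b * b' + c * a') (a * d' + b * c' + c * b' + d * a') := by
    refine ofEq (K := fun s => (b * d' + c * c' + d * b') + (c * d' + d * c') * s
      + d * d' * s ^ 2) (by fun_prop) (Eventually.of_forall fun s => by ring)
  simp only [one_mul, mul_one] at h1 h2
  refine (IsBigO.add (IsBigO.add h1 h2) h3).congr' ?_ EventuallyEq.rfl
  exact Eventually.of_forall fun s => by ring

/-- Inversion: `1/f` has any jet whose formal product with that of `f` is `1`. -/
lemma inv (hf : Jet f a b c d) (h0 : a * a' = 1) (h1 : a * b' + b * a' = 0)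
    (h2 : a * c' + b * b' + c * a' = 0) (h3 : a * d' + b * c' + c * b' + d * a' = 0) :
    Jet (fun s => (f s)⁻¹) a' b' c' d' := by
  have ha : a ≠ 0 := left_ne_zero_of_mul_eq_one h0
  have hm := (hf.mul (poly a' b' c' d')).cast h0 h1 h2 h3
  have hi : (fun s => (f s)⁻¹) =O[𝓝 0] (fun _ : ℝ => (1 : ℝ)) :=
    (hf.tendsto.inv₀ ha).norm.isBoundedUnder_le.isBigO_one ℝ
  have := (hi.mul hm).neg_left
  simp only [one_mul] at this
  refine this.congr' ?_ EventuallyEq.rfl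
  filter_upwards [hf.tendsto.eventually_ne ha] with s hs
  field_simp
  ring

lemma exp (hf : Jet f 0 b c d) :
    Jet (fun s => Complex.exp (f s)) 1 b (c + b ^ 2 / 2) (d + b * c + b ^ 3 / 6) := by
  have h1 : (fun s => Complex.exp (f s) - ∑ i ∈ Finset.range 4, (f s) ^ i / (i.factorial : ℂ))
      =O[𝓝 0] (fun s => f s ^ 4) :=
    (Complex.exp_sub_sum_range_isBigO_pow 4).comp_tendsto hf.tendsto
  have hb : f =O[𝓝 0] (fun s : ℝ => s) := by
    have e1 : (fun s : ℝ => s ^ 4) =O[𝓝 0] (fun s : ℝ => s) := by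
      have hc : ContinuousAt (fun s : ℝ => s ^ 3) 0 := by fun_prop
      have : (fun s : ℝ => s ^ 3 * s) =O[𝓝 0] (fun s : ℝ => (1:ℝ) * s) :=
        IsBigO.mul (hc.norm.isBoundedUnder_le.isBigO_one ℝ) (isBigO_refl _ _)
      simpa [← pow_succ] using this
    have hc : ContinuousAt (fun s : ℝ => b + c * s + d * s ^ 2) 0 := by fun_prop
    have e2 : (fun s : ℝ => (b + c * s + d * s ^ 2) * s) =O[𝓝 0] (fun s : ℝ => (1:ℝ) * s) :=
      IsBigO.mul (hc.norm.isBoundedUnder_le.isBigO_one ℝ) (IsBigO.of_bound 1 (by simp))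
    simp only [one_mul] at e2
    refine ((IsBigO.trans hf e1).add e2).congr' ?_ EventuallyEq.rfl
    exact Eventually.of_forall fun s => by ring
  have h2 := h1.trans (hb.pow 4)
  have h4 := ((poly 1 0 0 0).add hf).add
    ((((hf.mul hf).mul (poly (1/2) 0 0 0))).add (((hf.mul hf).mul hf).mul (poly (1/6) 0 0 0)))
  refine ((h2.add h4).congr' ?_ EventuallyEq.rfl)
  refine Eventually.of_forall fun s => ?_
  simp [Finset.sum_range_succ, Nat.factorial]
  ring

end Jet

/-! ### The WKB function and its residual -/

/-- The fourth root `(1 + u s²)^{1/4}`, real for small `s`. -/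
noncomputable def quart (u s : ℝ) : ℝ := (1 + u * s ^ 2) ^ (1 / 4 : ℝ)

/-- The WKB function `E(x) = exp(δ √x) x^{-1/4}`. -/
noncomputable def wkb (δ : ℂ) (x : ℝ) : ℂ :=
  Complex.exp (δ * (Real.sqrt x : ℂ)) * ((x ^ (-(1 / 4 : ℝ)) : ℝ) : ℂ)

/-- The ratio `E(x + u) / E(x)` as a function of `s = x^{-1/2}`. With `w = quart u s` one has
`√(x + u) - √x = u s / (w² + 1)` and `(x + u)^{-1/4} = x^{-1/4} / w`, so no singularity at `s = 0`
remains. -/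
noncomputable def wkbRatio (δ : ℂ) (u s : ℝ) : ℂ :=
  Complex.exp ((δ * u) * s * ((quart u s : ℂ) ^ 2 + 1)⁻¹) * (quart u s : ℂ)⁻¹

lemma wkb_ne_zero (δ : ℂ) {x : ℝ} (hx : 0 < x) : wkb δ x ≠ 0 := by
  have := (Real.rpow_pos_of_pos hx (-(1 / 4 : ℝ))).ne'
  simp only [wkb]
  exact mul_ne_zero (Complex.exp_ne_zero _) (by exact_mod_cast this)

lemma quart_continuousAt (u : ℝ) : ContinuousAt (quart u) 0 := by
  unfold quart
  refine ContinuousAt.rpow_const (by fun_prop) (Or.inl (by simp))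

lemma quart_pow {u s : ℝ} (h : 0 < 1 + u * s ^ 2) : quart u s ^ 4 = 1 + u * s ^ 2 := by
  unfold quart
  rw [← Real.rpow_natCast, ← Real.rpow_mul h.le]; norm_num

lemma quart_pos {u s : ℝ} (h : 0 < 1 + u * s ^ 2) : 0 < quart u s := Real.rpow_pos_of_pos h _

lemma one_add_pos (u : ℝ) : ∀ᶠ s : ℝ in 𝓝 0, 0 < 1 + u * s ^ 2 := by
  have : ContinuousAt (fun s : ℝ => 1 + u * s ^ 2) 0 := by fun_prop
  exact this.eventually (lt_mem_nhds (by simp))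

lemma jet_quart (u : ℝ) : Jet (fun s => (quart u s : ℂ)) 1 0 (u / 4) 0 := by
  have hc := quart_continuousAt u
  have h0 : quart u 0 = 1 := by simp [quart]
  -- exact remainder of the expansion, obtained from `u s² = w⁴ - 1` with `w = quart u s`
  refine Jet.ofEq (K := fun s => ((-(u ^ 2 * (quart u s ^ 2 + 2 * quart u s + 3) /
    (4 * ((quart u s + 1) * (quart u s ^ 2 + 1)) ^ 2)) : ℝ) : ℂ)) ?_ ?_
  · refine Complex.continuous_ofReal.continuousAt.comp ?_
    refine ContinuousAt.neg (ContinuousAt.div (by fun_prop) (by fun_prop) ?_)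
    rw [h0]; norm_num
  · filter_upwards [one_add_pos u] with s hs
    have h1 := quart_pow hs
    have h2 := quart_pos hs
    set w := quart u s
    have : w = 1 + u / 4 * s ^ 2 + -(u ^ 2 * (w ^ 2 + 2 * w + 3) /
      (4 * ((w + 1) * (w ^ 2 + 1)) ^ 2)) * s ^ 4 := by
      have h3 : u * s ^ 2 = (w - 1) * ((w + 1) * (w ^ 2 + 1)) := by linear_combination -h1
      have h4 : u ^ 2 * s ^ 4 = ((w - 1) * ((w + 1) * (w ^ 2 + 1))) ^ 2 := by rw [← h3]; ring
      have h5 : (w + 1) * (w ^ 2 + 1) ≠ 0 := by positivity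
      have h6 : u ^ 2 * (w ^ 2 + 2 * w + 3) / (4 * ((w + 1) * (w ^ 2 + 1)) ^ 2) * s ^ 4
        = (w - 1) ^ 2 * (w ^ 2 + 2 * w + 3) / 4 := by
        rw [div_mul_eq_mul_div, div_eq_div_iff (by positivity) (by norm_num)]
        linear_combination (w ^ 2 + 2 * w + 3) * 4 * h4
      linear_combination h6 - h3 / 4
    have h7 := congrArg (fun x : ℝ => (x : ℂ)) this
    refine h7.trans ?_
    push_cast
    ring

lemma jet_wkbRatio (δ : ℂ) (u : ℝ) (hu : u ^ 2 = 1) :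
    Jet (wkbRatio δ u) 1 (δ * u / 2) (δ ^ 2 / 8 - u / 4) (-δ / 4 + u * δ ^ 3 / 48) := by
  have hu' : (u : ℂ) ^ 2 = 1 := by exact_mod_cast hu
  have hw := jet_quart u
  have h1 : Jet (fun s => (quart u s : ℂ) ^ 2 + 1) 2 0 (u / 2) 0 :=
    (((hw.mul hw).add (Jet.poly 1 0 0 0)).cast (by norm_num) (by norm_num) (by ring)
      (by norm_num)).congr (Eventually.of_forall fun s => by ring)
  have h2 := h1.inv (a' := 1 / 2) (b' := 0) (c' := -u / 8) (d' := 0)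
    (by norm_num) (by norm_num) (by ring) (by norm_num)
  have h3 : Jet (fun s => (δ * u) * s * ((quart u s : ℂ) ^ 2 + 1)⁻¹) 0 (δ * u / 2) 0 (-δ / 8) :=
    (((Jet.poly 0 (δ * u) 0 0).mul h2).cast (by ring) (by ring) (by ring)
      (by linear_combination (-δ / 8) * hu')).congr (Eventually.of_forall fun s => by ring)
  have h4 := hw.inv (a' := 1) (b' := 0) (c' := -u / 4) (d' := 0)
    (by norm_num) (by norm_num) (by ring) (by norm_num)
  refine (h3.exp.mul h4).cast (by ring) (by ring) ?_ ?_
  · linear_combination (δ ^ 2 / 8) * hu'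
  · linear_combination (δ ^ 3 / 48 * u - δ / 8) * hu'

lemma wkb_add (δ : ℂ) {x u : ℝ} (hx : 0 < x) (hxu : 0 < x + u) :
    wkb δ (x + u) = wkb δ x * wkbRatio δ u (1 / Real.sqrt x) := by
  have hsx : 0 < Real.sqrt x := Real.sqrt_pos.2 hx
  have hsq : (1 / Real.sqrt x) ^ 2 = 1 / x := by rw [div_pow, Real.sq_sqrt hx.le, one_pow]
  have he : x + u = x * (1 + u * (1 / Real.sqrt x) ^ 2) := by rw [hsq]; field_simp
  have hp : 0 < 1 + u * (1 / Real.sqrt x) ^ 2 := by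
    rw [he] at hxu; exact (pos_iff_pos_of_mul_pos hxu).1 hx
  have hw4 := quart_pow hp
  have hw0 := quart_pos hp
  unfold wkb wkbRatio
  have hinv : (x + u) ^ (-(1 / 4 : ℝ)) = x ^ (-(1 / 4 : ℝ)) * (quart u (1 / Real.sqrt x))⁻¹ := by
    rw [he, Real.mul_rpow hx.le hp.le, Real.rpow_neg hp.le]; rfl
  have hsqrt : Real.sqrt (x + u) = Real.sqrt x * quart u (1 / Real.sqrt x) ^ 2 := by
    rw [he, Real.sqrt_mul hx.le, ← hw4]
    congr 1
    rw [show quart u (1 / Real.sqrt x) ^ 4 = (quart u (1 / Real.sqrt x) ^ 2) ^ 2 by ring]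
    exact Real.sqrt_sq (by positivity)
  have hexp : Real.sqrt (x + u) = Real.sqrt x + u * (1 / Real.sqrt x) *
      (quart u (1 / Real.sqrt x) ^ 2 + 1)⁻¹ := by
    rw [hsqrt]
    set w := quart u (1 / Real.sqrt x)
    have h1 : w ^ 4 = 1 + u / x := by rw [hw4, hsq]; ring
    have h2 : u = (w ^ 4 - 1) * Real.sqrt x ^ 2 := by
      rw [Real.sq_sqrt hx.le, h1]; field_simp; ring
    have h3 : w ^ 2 + 1 ≠ 0 := by positivity
    rw [h2]
    field_simp
    ring
  rw [hinv, hexp]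
  push_cast
  rw [mul_add, Complex.exp_add]
  rw [show δ * (↑u * (1 / (Real.sqrt x : ℂ)) * ((quart u (1 / Real.sqrt x) : ℂ) ^ 2 + 1)⁻¹)
    = δ * ↑u * (1 / (Real.sqrt x : ℂ)) * ((quart u (1 / Real.sqrt x) : ℂ) ^ 2 + 1)⁻¹ by ring]
  ring

/-- Coefficient of `X_k` in the recurrence `XRec`, as a function of `s = (k + 1)^{-1/2}`: the number
`2 k q p (2 k - 1) / ((k + 1) (2 k - l))`. -/
noncomputable def cP (p q l : ℂ) (s : ℝ) : ℂ :=
  2 * p * q * (1 - s ^ 2) * (2 - 3 * s ^ 2) * (2 - (2 + l) * s ^ 2)⁻¹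

/-- Coefficient of `X_{k+2}` in the recurrence `XRec`, as a function of `s = (k + 1)^{-1/2}`: the
number `2 p q (2 k + 1) / (2 k + 2 - l)`. -/
noncomputable def cR (p q l : ℂ) (s : ℝ) : ℂ :=
  2 * p * q * (2 - s ^ 2) * (2 - l * s ^ 2)⁻¹

/-- Coefficient of `X_{k+1}` in the recurrence `XRec`, as a function of `s = (k + 1)^{-1/2}`: the
number `(4 k² q² / (2 k - l) + p² (2 k + 1)² / (2 k + 2 - l) - (2 k + 1 - l)) / (k + 1)`. -/
noncomputable def cQ (p q l : ℂ) (s : ℝ) : ℂ :=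
  4 * q ^ 2 * (1 - s ^ 2) ^ 2 * (2 - (2 + l) * s ^ 2)⁻¹
    + p ^ 2 * (2 - s ^ 2) ^ 2 * (2 - l * s ^ 2)⁻¹ - (2 - (1 + l) * s ^ 2)

lemma jet_inv_two (b : ℂ) : Jet (fun s => (2 - b * (s:ℂ) ^ 2)⁻¹) (1 / 2) 0 (b / 4) 0 := by
  have h : Jet (fun s => 2 - b * (s:ℂ) ^ 2) 2 0 (-b) 0 :=
    (Jet.poly 2 0 (-b) 0).congr (Eventually.of_forall fun s => by ring)
  exact h.inv (by norm_num) (by norm_num) (by ring) (by norm_num)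

lemma jet_cP (p q l : ℂ) : Jet (cP p q l) (2 * p * q) 0 (p * q * (l - 3)) 0 := by
  have h : Jet (fun s => 2 * p * q * (1 - (s:ℂ) ^ 2) * (2 - 3 * (s:ℂ) ^ 2))
      (4 * p * q) 0 (-10 * p * q) 0 :=
    Jet.ofEq (K := fun _ => 6 * p * q) (by fun_prop) (Eventually.of_forall fun s => by ring)
  exact (h.mul (jet_inv_two (2 + l))).cast (by ring) (by ring) (by ring) (by ring)

lemma jet_cR (p q l : ℂ) : Jet (cR p q l) (2 * p * q) 0 (p * q * (l - 1)) 0 := by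
  have h : Jet (fun s => 2 * p * q * (2 - (s:ℂ) ^ 2)) (4 * p * q) 0 (-2 * p * q) 0 :=
    (Jet.poly _ _ _ _).congr (Eventually.of_forall fun s => by ring)
  exact (h.mul (jet_inv_two l)).cast (by ring) (by ring) (by ring) (by ring)

lemma jet_cQ {p q : ℂ} (l : ℂ) (hpq : p + q = 1) :
    Jet (cQ p q l) (-4 * p * q) 0 (2 * l - 1 - 2 * p * q * (l - 2)) 0 := by
  have h1 : Jet (fun s => 4 * q ^ 2 * (1 - (s:ℂ) ^ 2) ^ 2) (4 * q ^ 2) 0 (-8 * q ^ 2) 0 :=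
    Jet.ofEq (K := fun _ => 4 * q ^ 2) (by fun_prop) (Eventually.of_forall fun s => by ring)
  have h2 : Jet (fun s => p ^ 2 * (2 - (s:ℂ) ^ 2) ^ 2) (4 * p ^ 2) 0 (-4 * p ^ 2) 0 :=
    Jet.ofEq (K := fun _ => p ^ 2) (by fun_prop) (Eventually.of_forall fun s => by ring)
  have hp : p = 1 - q := by linear_combination hpq
  refine ((((h1.mul (jet_inv_two (2 + l))).add (h2.mul (jet_inv_two l))).add
    (Jet.poly (-2) 0 (1 + l) 0)).cast ?_ ?_ ?_ ?_).congr
    (Eventually.of_forall fun s => by simp only [cQ]; ring)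
  all_goals subst hp; ring

/-- The residual of `E` in the recurrence is of fourth order in `s`: the choice of `δ` kills the
`s²` term and the exponent `-1/4` kills the `s³` term. -/
lemma jet_residual {p q l δ : ℂ} (hpq : p + q = 1) (hδ : p * q * δ ^ 2 = 2 * (1 - 2 * l)) :
    Jet (fun s => cP p q l s * wkbRatio δ (-1) s + cQ p q l s + cR p q l s * wkbRatio δ 1 s)
      0 0 0 0 := by
  refine ((((jet_cP p q l).mul (jet_wkbRatio δ (-1) (by norm_num))).add (jet_cQ l hpq)).add
    ((jet_cR p q l).mul (jet_wkbRatio δ 1 (by norm_num)))).cast ?_ ?_ ?_ ?_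
  all_goals push_cast
  · ring
  · ring
  · linear_combination hδ / 2
  · ring

/-! ### Backward and forward recursions with summable perturbations -/

/-- The comparison sequence `k^{-1/2}`; its value at `k = 0` is the junk value `0`. -/
noncomputable def iv (k : ℕ) : ℝ := 1 / Real.sqrt k

lemma iv_nonneg (k : ℕ) : 0 ≤ iv k := by unfold iv; positivity

lemma iv_pos {k : ℕ} (hk : 1 ≤ k) : 0 < iv k := by
  have : (0:ℝ) < k := by exact_mod_cast hk
  unfold iv; positivity

lemma iv_sq (k : ℕ) : iv k ^ 2 = 1 / k := by
  unfold iv; rw [div_pow, Real.sq_sqrt (Nat.cast_nonneg k), one_pow]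

lemma iv_succ_le {k : ℕ} (hk : 1 ≤ k) : iv (k + 1) ≤ iv k := by
  have : (0:ℝ) < k := by exact_mod_cast hk
  unfold iv
  gcongr
  simp

lemma iv_tendsto : Tendsto iv atTop (𝓝 0) := by
  unfold iv
  simp only [one_div]
  exact tendsto_inv_atTop_zero.comp (Real.tendsto_sqrt_atTop.comp tendsto_natCast_atTop_atTop)

lemma iv_succ_tendsto : Tendsto (fun k : ℕ => iv (k + 1)) atTop (𝓝 0) :=
  (tendsto_add_atTop_iff_nat 1).2 iv_tendsto

lemma iv_sq_sub {k : ℕ} (hk : 1 ≤ k) :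
    iv k ^ 2 - iv (k + 1) ^ 2 = iv k ^ 2 * iv (k + 1) ^ 2 := by
  have : (0:ℝ) < k := by exact_mod_cast hk
  rw [iv_sq, iv_sq]; push_cast; field_simp; ring

lemma iv_sq_le {k : ℕ} (hk : 1 ≤ k) : iv k ^ 2 ≤ 2 * iv (k + 1) ^ 2 := by
  have : (1:ℝ) ≤ k := by exact_mod_cast hk
  rw [iv_sq, iv_sq]; push_cast
  rw [mul_one_div, div_le_div_iff₀ (by positivity) (by positivity)]
  linarith

/-- `k^{-3/2}` is dominated by a telescoping difference. -/
lemma iv_cube_le {k : ℕ} (hk : 1 ≤ k) : iv k ^ 3 ≤ 4 * (iv k - iv (k + 1)) := by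
  have h1 := iv_sq_sub hk
  have h2 := iv_sq_le hk
  have h3 := iv_succ_le hk
  have h4 := iv_pos hk
  have h5 := iv_nonneg (k + 1)
  set a := iv k
  set b := iv (k + 1)
  have h6 : a ^ 2 * b ^ 2 ≤ (a - b) * (2 * a) := by nlinarith
  have h7 : a * (a ^ 3) ≤ a * (4 * (a - b)) := by nlinarith [sq_nonneg a]
  exact le_of_mul_le_mul_left h7 h4

lemma iv_sub_cube_le {k : ℕ} (hk : 1 ≤ k) : iv k ^ 3 - iv (k + 1) ^ 3 ≤ 3 * iv k ^ 5 := by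
  have h1 := iv_sq_sub hk
  have h3 := iv_succ_le hk
  have h4 := iv_pos hk
  have h5 := iv_nonneg (k + 1)
  set a := iv k
  set b := iv (k + 1)
  have hb : b ^ 2 ≤ a ^ 2 := by gcongr
  have h6 : a - b ≤ a ^ 3 := by
    have : a * (a - b) ≤ a * a ^ 3 := by nlinarith [sq_nonneg a]
    exact le_of_mul_le_mul_left this h4
  have h7 : a ^ 2 + a * b + b ^ 2 ≤ 3 * a ^ 2 := by nlinarith
  calc a ^ 3 - b ^ 3 = (a - b) * (a ^ 2 + a * b + b ^ 2) := by ring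
    _ ≤ a ^ 3 * (3 * a ^ 2) := by gcongr
    _ = 3 * a ^ 5 := by ring

/-- A sequence whose increments are dominated by those of `C k^{-1/2}` converges, with rate. -/
lemma exists_limit_of_increments {V : Type*} [NormedAddCommGroup V] [CompleteSpace V]
    (f : ℕ → V) (C : ℝ) (N : ℕ)
    (h : ∀ k ≥ N, ‖f (k + 1) - f k‖ ≤ C * (iv k - iv (k + 1))) (hC : 0 ≤ C) :
    ∃ L, Tendsto f atTop (𝓝 L) ∧ ∀ k ≥ N, ‖f k - L‖ ≤ C * iv k := by
  have key : ∀ k ≥ N, ∀ m ≥ k, ‖f m - f k‖ ≤ C * (iv k - iv m) := by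
    intro k hk m hm
    induction m, hm using Nat.le_induction with
    | base => simp
    | succ m hm ih =>
      calc ‖f (m + 1) - f k‖ = ‖(f (m + 1) - f m) + (f m - f k)‖ := by abel_nf
        _ ≤ _ := norm_add_le _ _
        _ ≤ _ := add_le_add (h m (le_trans hk hm)) ih
        _ = _ := by ring
  have key2 : ∀ k ≥ N, ∀ m ≥ k, ‖f m - f k‖ ≤ C * iv k := fun k hk m hm =>
    (key k hk m hm).trans (by nlinarith [mul_nonneg hC (iv_nonneg m)])
  have hcau : CauchySeq (fun n => f (n + N)) := by
    refine cauchySeq_of_le_tendsto_0 (fun n => 2 * C * iv (n + N)) ?_ ?_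
    · intro n m K hn hm
      have h1 := key2 (K + N) (by omega) (n + N) (by omega)
      have h2 := key2 (K + N) (by omega) (m + N) (by omega)
      rw [← dist_eq_norm] at h1 h2
      have h3 := dist_triangle_right (f (n + N)) (f (m + N)) (f (K + N))
      linarith
    · have := ((tendsto_add_atTop_iff_nat N).2 iv_tendsto).const_mul (2 * C)
      simpa using this
  obtain ⟨L, hL⟩ := cauchySeq_tendsto_of_complete hcau
  have hL' : Tendsto f atTop (𝓝 L) := (tendsto_add_atTop_iff_nat N).1 hL
  refine ⟨L, hL', fun k hk => ?_⟩
  have h1 : Tendsto (fun m => ‖f m - f k‖) atTop (𝓝 ‖L - f k‖) := (hL'.sub_const _).norm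
  rw [norm_sub_rev]
  exact le_of_tendsto h1 (eventually_atTop.2 ⟨k, fun m hm => key2 k hk m hm⟩)

/-- The ordered product `ordProd M N n = M_N M_{N+1} ⋯ M_{N+n-1}`. -/
noncomputable def ordProd {V : Type*} [NormedAddCommGroup V] [NormedSpace ℂ V]
    (M : ℕ → V →L[ℂ] V) : ℕ → ℕ → (V →L[ℂ] V)
  | _, 0 => ContinuousLinearMap.id ℂ V
  | N, n + 1 => (M N).comp (ordProd M (N + 1) n)

lemma ordProd_succ' {V : Type*} [NormedAddCommGroup V] [NormedSpace ℂ V]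
    (M : ℕ → V →L[ℂ] V) (n : ℕ) : ∀ N, ordProd M N (n + 1) = (ordProd M N n).comp (M (N + n)) := by
  induction n with
  | zero => intro N; ext; simp [ordProd]
  | succ n ih =>
    intro N
    rw [ordProd, ih, ordProd, ContinuousLinearMap.comp_assoc]
    congr 3
    omega

/-- Backward recursion `z_k = M_k z_{k+1}`: if the operators `M_k` are summably close to
contractions and almost fix `e`, there is a solution tending to `e`. It is `z_k = lim M_k M_{k+1}
⋯ M_{k+n-1} e`; summability is measured by the increments of `k^{-1/2}`, which gives the rate. -/
lemma exists_backward {V : Type*} [NormedAddCommGroup V] [NormedSpace ℂ V] [CompleteSpace V]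
    (M : ℕ → V →L[ℂ] V) (e : V) (C : ℝ) (hC : 0 ≤ C) (N : ℕ) (hN : 1 ≤ N)
    (hM : ∀ k ≥ N, ‖M k‖ ≤ 1 + C * (iv k - iv (k + 1)))
    (he : ∀ k ≥ N, ‖M k e - e‖ ≤ C * (iv k - iv (k + 1))) :
    ∃ z : ℕ → V, (∀ k ≥ N, z k = M k (z (k + 1))) ∧ ∃ B, ∀ k ≥ N, ‖z k - e‖ ≤ B * iv k := by
  have hQ : ∀ n, ∀ K ≥ N, ‖ordProd M K n‖ ≤ Real.exp (C * (iv K - iv (K + n))) := by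
    intro n
    induction n with
    | zero => intro K _; simpa [ordProd] using ContinuousLinearMap.norm_id_le
    | succ n ih =>
      intro K hK
      rw [ordProd]
      refine (ContinuousLinearMap.opNorm_comp_le _ _).trans ?_
      have h1 : ‖M K‖ ≤ Real.exp (C * (iv K - iv (K + 1))) :=
        (hM K hK).trans (by linarith [Real.add_one_le_exp (C * (iv K - iv (K + 1)))])
      have h2 := ih (K + 1) (by omega)
      calc _ ≤ Real.exp (C * (iv K - iv (K + 1))) * Real.exp (C * (iv (K + 1) - iv (K + 1 + n))) :=
            mul_le_mul h1 h2 (norm_nonneg _) (Real.exp_nonneg _)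
        _ = _ := by rw [← Real.exp_add, show K + (n + 1) = K + 1 + n by omega]; ring_nf
  have hmono : ∀ K ≥ N, iv K ≤ iv N := by
    intro K hK
    induction K, hK using Nat.le_induction with
    | base => rfl
    | succ m hm ih => exact (iv_succ_le (hN.trans hm)).trans ih
  set B := Real.exp (C * iv N) with hB
  have hQ' : ∀ n, ∀ K ≥ N, ‖ordProd M K n‖ ≤ B := by
    intro n K hK
    refine (hQ n K hK).trans (Real.exp_le_exp.2 (mul_le_mul_of_nonneg_left ?_ hC))
    linarith [hmono K hK, iv_nonneg (K + n)]
  have hlim : ∀ K, ∃ L, N ≤ K → Tendsto (fun n => ordProd M K n e) atTop (𝓝 L) ∧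
      ‖e - L‖ ≤ B * C * iv K := by
    intro K
    by_cases hK : N ≤ K
    swap
    · exact ⟨0, fun h => absurd h hK⟩
    obtain ⟨L, hL1, hL2⟩ := exists_limit_of_increments
      (fun m => ordProd M K (m - K) e) (B * C) K (by
        intro k hk
        rw [show k + 1 - K = (k - K) + 1 by omega, ordProd_succ', ContinuousLinearMap.comp_apply,
          ← map_sub, show K + (k - K) = k by omega]
        refine (ContinuousLinearMap.le_opNorm _ _).trans ?_
        rw [mul_assoc]
        exact mul_le_mul (hQ' _ _ hK) (he k (hK.trans hk)) (norm_nonneg _) (Real.exp_nonneg _))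
      (mul_nonneg (Real.exp_nonneg _) hC)
    refine ⟨L, fun _ => ⟨?_, ?_⟩⟩
    · have := (tendsto_add_atTop_iff_nat K).2 hL1
      simpa using this
    · simpa [ordProd] using hL2 K le_rfl
  choose z hz using hlim
  refine ⟨z, fun k hk => ?_, B * C, fun k hk => ?_⟩
  · have h1 := (tendsto_add_atTop_iff_nat 1).2 (hz k hk).1
    have h2 := ((M k).continuous.tendsto _).comp (hz (k + 1) (by omega)).1
    exact tendsto_nhds_unique h1 h2
  · rw [norm_sub_rev]; exact (hz k hk).2

/-- Forward recursion for `z`, whose increments contract by a factor `1 - c k^{-1/2}` and are forced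
by a term of order `k^{-2}`. Starting from increment `0` and value `1`, the increments stay below
`M k^{-3/2}` with `M = 4 C / c`, because the contraction outweighs both the forcing and the decay of
`k^{-3/2}` itself. Hence `z` converges to a nonzero limit, and can be normalised to tend to `1`. -/
lemma exists_forward (τ η : ℕ → ℂ) (c C : ℝ) (hc : 0 < c) (hC : 0 < C) (N₀ : ℕ)
    (hτ : ∀ k ≥ N₀, ‖τ k‖ ≤ 1 - c * iv k) (hη : ∀ k ≥ N₀, ‖η k‖ ≤ C * iv k ^ 4) :
    ∃ z : ℕ → ℂ, ∃ N, ∃ B : ℝ, (∀ k ≥ N, z (k + 2) - z (k + 1) = τ k * (z (k + 1) - z k)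
      - η k * z (k + 1)) ∧ ∀ k ≥ N, ‖z k - 1‖ ≤ B * iv k := by
  set M := 4 * C / c with hM
  have hM0 : 0 < M := by positivity
  have hcM : c * M = 4 * C := by rw [hM]; field_simp
  have e1 : ∀ᶠ k in atTop, 6 * iv k < c := by
    have := iv_tendsto.const_mul 6
    exact this.eventually (gt_mem_nhds (by simpa using hc))
  have e2 : ∀ᶠ k in atTop, 4 * M * iv k < 1 / 2 := by
    have := iv_tendsto.const_mul (4 * M)
    exact this.eventually (gt_mem_nhds (by simp))
  obtain ⟨N₁, hN₁⟩ := eventually_atTop.1 (e1.and e2)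
  set N := max 1 (max N₀ N₁) with hNdef
  have hN1 : 1 ≤ N := le_max_left _ _
  have hNN0 : N₀ ≤ N := (le_max_left _ _).trans (le_max_right _ _)
  have hNN1 : N₁ ≤ N := (le_max_right _ _).trans (le_max_right _ _)
  -- `st n` is the pair `(z (N + n + 1) - z (N + n), z (N + n))`
  let st : ℕ → ℂ × ℂ := fun n => Nat.rec (0, 1)
    (fun n x => (τ (N + n) * x.1 - η (N + n) * (x.2 + x.1), x.2 + x.1)) n
  have st0 : st 0 = (0, 1) := rfl
  have sts : ∀ n, st (n + 1) = (τ (N + n) * (st n).1 - η (N + n) * ((st n).2 + (st n).1),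
    (st n).2 + (st n).1) := fun n => rfl
  have claim : ∀ n, ‖(st n).1‖ ≤ M * iv (N + n) ^ 3 ∧
      ‖(st n).2 - 1‖ ≤ 4 * M * (iv N - iv (N + n)) := by
    intro n
    induction n with
    | zero => rw [st0]; simp only [norm_zero, sub_self, add_zero, mul_zero, le_refl, and_true]
              have := iv_nonneg N; positivity
    | succ n ih =>
      obtain ⟨ih1, ih2⟩ := ih
      have hk1 : 1 ≤ N + n := by omega
      have hv0 := iv_pos hk1
      have hτk := hτ (N + n) (by omega)
      have hηk := hη (N + n) (by omega)
      have hcub := iv_cube_le hk1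
      have hcs := iv_sub_cube_le hk1
      obtain ⟨h6, h4⟩ := hN₁ (N + n) (by omega)
      obtain ⟨_, h4N⟩ := hN₁ N hNN1
      rw [sts]
      rw [← add_assoc]
      have hz' : ‖(st n).2 + (st n).1 - 1‖ ≤ 4 * M * (iv N - iv (N + n + 1)) := by
        calc _ = ‖((st n).2 - 1) + (st n).1‖ := by ring_nf
          _ ≤ _ := norm_add_le _ _
          _ ≤ _ := add_le_add ih2 ih1
          _ ≤ _ := by nlinarith
      refine ⟨?_, hz'⟩
      have hz2 : ‖(st n).2 + (st n).1‖ ≤ 2 := by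
        have h1 : ‖(st n).2 + (st n).1‖ ≤ ‖(st n).2 + (st n).1 - 1‖ + ‖(1:ℂ)‖ := by
          simpa using norm_add_le ((st n).2 + (st n).1 - 1) 1
        have := iv_nonneg (N + n + 1)
        rw [norm_one] at h1
        nlinarith
      set v := iv (N + n)
      set w := iv (N + n + 1)
      calc _ ≤ ‖τ (N + n) * (st n).1‖ + ‖η (N + n) * ((st n).2 + (st n).1)‖ := norm_sub_le _ _
        _ ≤ (1 - c * v) * (M * v ^ 3) + C * v ^ 4 * 2 := by
          rw [norm_mul, norm_mul]
          gcongr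
          exact (norm_nonneg _).trans hτk
        _ = M * v ^ 3 - c * M / 2 * v ^ 4 := by
          have : C = c * M / 4 := by linarith
          rw [this]; ring
        _ ≤ M * w ^ 3 := by
          have h5 : 3 * v ^ 5 ≤ c / 2 * v ^ 4 := by
            have : 0 < v ^ 4 := by positivity
            nlinarith
          nlinarith
  let f : ℕ → ℂ := fun k => (st (k - N)).2
  have hfs : ∀ k ≥ N, f (k + 1) - f k = (st (k - N)).1 := by
    intro k hk
    simp only [f]
    rw [show k + 1 - N = (k - N) + 1 by omega, sts]
    simp
  obtain ⟨L, hL1, hL2⟩ := exists_limit_of_increments f (4 * M) N (by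
    intro k hk
    rw [hfs k hk]
    have := (claim (k - N)).1
    rw [show N + (k - N) = k by omega] at this
    have h2 := iv_cube_le (hN1.trans hk)
    nlinarith) (by positivity)
  have hL0 : L ≠ 0 := by
    intro h0
    have h1 := hL2 N le_rfl
    have h2 : f N = 1 := by simp [f, st0]
    rw [h2, h0] at h1
    have h3 := (hN₁ N hNN1).2
    simp at h1
    linarith
  refine ⟨fun k => f k / L, N, 4 * M / ‖L‖, ?_, ?_⟩
  · intro k hk
    have h1 := hfs k hk
    have h2 := hfs (k + 1) (by omega)
    have h3 := sts (k - N)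
    rw [show k + 1 - N = (k - N) + 1 by omega, h3, show N + (k - N) = k by omega] at h2
    have h4 : f k = (st (k - N)).2 := rfl
    simp only [← h1] at h2
    rw [show k + 2 = k + 1 + 1 by ring, ← sub_div, h2]
    ring
  · intro k hk
    have h1 := hL2 k hk
    have : f k / L - 1 = (f k - L) / L := by field_simp
    simp only [this]
    rw [norm_div, div_mul_eq_mul_div]
    gcongr

/-! ### Jets along the sequence of inverse square roots -/

namespace Jet

variable {f : ℝ → ℂ} {a b c d : ℂ}

lemma order_two (h : Jet f a b c d) :
    (fun s : ℝ => f s - (a + b * s)) =O[𝓝 0] (fun s : ℝ => s ^ 2) := by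
  have e1 : (fun s : ℝ => s ^ 4) =O[𝓝 0] (fun s : ℝ => s ^ 2) := by
    have hc : ContinuousAt (fun s : ℝ => s ^ 2) 0 := by fun_prop
    have : (fun s : ℝ => s ^ 2 * s ^ 2) =O[𝓝 0] (fun s : ℝ => (1:ℝ) * s ^ 2) :=
      IsBigO.mul (hc.norm.isBoundedUnder_le.isBigO_one ℝ) (isBigO_refl _ _)
    simpa [← pow_add] using this
  have hc : ContinuousAt (fun s : ℝ => c + d * s) 0 := by fun_prop
  have e2 : (fun s : ℝ => (c + d * s) * (s : ℂ) ^ 2) =O[𝓝 0] (fun s : ℝ => (1:ℝ) * s ^ 2) :=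
    IsBigO.mul (hc.norm.isBoundedUnder_le.isBigO_one ℝ) (IsBigO.of_bound 1 (by simp))
  simp only [one_mul] at e2
  refine ((IsBigO.trans h e1).add e2).congr' ?_ EventuallyEq.rfl
  exact Eventually.of_forall fun s => by ring

lemma bound_four (h : Jet f 0 0 0 0) :
    ∃ C > 0, ∀ᶠ k : ℕ in atTop, ‖f (iv (k + 1))‖ ≤ C * iv (k + 1) ^ 4 := by
  obtain ⟨C, hC, hb⟩ := (h.comp_tendsto iv_succ_tendsto).exists_pos
  refine ⟨C, hC, hb.bound.mono fun k hk => ?_⟩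
  simpa [abs_of_nonneg (iv_nonneg _)] using hk

lemma bound_two (h : Jet f a b c d) :
    ∃ C > 0, ∀ᶠ k : ℕ in atTop,
      ‖f (iv (k + 1)) - (a + b * (iv (k + 1) : ℂ))‖ ≤ C * iv (k + 1) ^ 2 := by
  obtain ⟨C, hC, hb⟩ := (h.order_two.comp_tendsto iv_succ_tendsto).exists_pos
  refine ⟨C, hC, hb.bound.mono fun k hk => ?_⟩
  simpa [abs_of_nonneg (iv_nonneg _)] using hk

lemma lower_zero (h : Jet f a b c d) (ha : a ≠ 0) :
    ∀ᶠ k : ℕ in atTop, ‖a‖ / 2 ≤ ‖f (iv (k + 1))‖ := by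
  have := (h.tendsto.comp iv_succ_tendsto).norm
  exact (this.eventually (lt_mem_nhds (half_lt_self (norm_pos_iff.2 ha)))).mono fun k hk => hk.le

lemma lower_one (h : Jet f 0 b c d) (hb : b ≠ 0) :
    ∀ᶠ k : ℕ in atTop, ‖b‖ / 2 * iv (k + 1) ≤ ‖f (iv (k + 1))‖ := by
  obtain ⟨C, hC, hbd⟩ := h.bound_two
  have hb' : 0 < ‖b‖ := norm_pos_iff.2 hb
  have e1 : ∀ᶠ k : ℕ in atTop, C * iv (k + 1) < ‖b‖ / 2 := by
    have := iv_succ_tendsto.const_mul C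
    exact this.eventually (gt_mem_nhds (by simpa using hb'))
  filter_upwards [hbd, e1] with k h1 h2
  have h3 : ‖b * (iv (k + 1) : ℂ)‖ = ‖b‖ * iv (k + 1) := by
    rw [norm_mul, Complex.norm_real, Real.norm_of_nonneg (iv_nonneg _)]
  have h4 := norm_sub_norm_le (b * (iv (k + 1) : ℂ))
    (-(f (iv (k + 1)) - (0 + b * (iv (k + 1) : ℂ))))
  rw [norm_neg, h3, show b * (iv (k + 1) : ℂ) - -(f (iv (k + 1)) - (0 + b * (iv (k + 1) : ℂ)))
    = f (iv (k + 1)) by ring] at h4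
  have := iv_nonneg (k + 1)
  nlinarith

end Jet

/-! ### Solutions of the scalar recurrence -/

/-- The recurrence for the normalised odd-indexed part `X_k = α^{-k} u_{2k-1}` at the index `k`,
obtained by eliminating the even-indexed part; see `evenPart_rec`. -/
def XRec (p q l : ℂ) (X : ℕ → ℂ) (k : ℕ) : Prop :=
  cP p q l (iv (k + 1)) * X k + cQ p q l (iv (k + 1)) * X (k + 1)
    + cR p q l (iv (k + 1)) * X (k + 2) = 0

lemma wkb_prev (δ : ℂ) {k : ℕ} (hk : 1 ≤ k) :
    wkb δ k = wkb δ (k + 1 : ℕ) * wkbRatio δ (-1) (iv (k + 1)) := by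
  have : (0:ℝ) < k := by exact_mod_cast hk
  have := wkb_add δ (x := ((k + 1 : ℕ) : ℝ)) (u := -1) (by positivity) (by push_cast; linarith)
  rw [show ((k + 1 : ℕ) : ℝ) + -1 = k by push_cast; ring] at this
  exact this

lemma wkb_next (δ : ℂ) (k : ℕ) :
    wkb δ (k + 2 : ℕ) = wkb δ (k + 1 : ℕ) * wkbRatio δ 1 (iv (k + 1)) := by
  have := wkb_add δ (x := ((k + 1 : ℕ) : ℝ)) (u := 1) (by positivity) (by positivity)
  rw [show ((k + 1 : ℕ) : ℝ) + 1 = (k + 2 : ℕ) by push_cast; ring] at this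
  exact this

lemma wkbRatio_ne_zero (δ : ℂ) {u s : ℝ} (h : 0 < 1 + u * s ^ 2) : wkbRatio δ u s ≠ 0 := by
  have := (quart_pos h).ne'
  unfold wkbRatio
  exact mul_ne_zero (Complex.exp_ne_zero _) (inv_ne_zero (by exact_mod_cast this))

lemma norm_wkb (δ : ℂ) {x : ℝ} (hx : 0 < x) :
    ‖wkb δ x‖ = Real.exp (δ.re * Real.sqrt x) * x ^ (-(1 / 4 : ℝ)) := by
  unfold wkb
  rw [norm_mul, Complex.norm_exp, Complex.norm_real,
    Real.norm_of_nonneg (Real.rpow_pos_of_pos hx _).le]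
  simp

/-- For `Re δ ≥ 0` the quotient of the two WKB sequences has nondecreasing modulus. -/
lemma norm_wkb_mul_le {δ : ℂ} (hδ : 0 ≤ δ.re) {k : ℕ} (hk : 1 ≤ k) :
    ‖wkb δ k‖ * ‖wkb (-δ) (k + 1 : ℕ)‖ ≤ ‖wkb δ (k + 1 : ℕ)‖ * ‖wkb (-δ) k‖ := by
  have h0 : (0:ℝ) < k := by exact_mod_cast hk
  have h1 : (0:ℝ) < (k + 1 : ℕ) := by positivity
  have hs : Real.sqrt k ≤ Real.sqrt (k + 1 : ℕ) := Real.sqrt_le_sqrt (by push_cast; linarith)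
  have e1 : δ.re * Real.sqrt k ≤ δ.re * Real.sqrt (k + 1 : ℕ) := by gcongr
  have e2 : (-δ).re * Real.sqrt (k + 1 : ℕ) ≤ (-δ).re * Real.sqrt k := by
    rw [Complex.neg_re]; linarith
  rw [norm_wkb _ h0, norm_wkb _ h0, norm_wkb _ h1, norm_wkb _ h1]
  have p0 := Real.rpow_pos_of_pos h0 (-(1 / 4 : ℝ))
  have p1 := Real.rpow_pos_of_pos h1 (-(1 / 4 : ℝ))
  calc _ = Real.exp (δ.re * Real.sqrt k) * Real.exp ((-δ).re * Real.sqrt (k + 1 : ℕ)) *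
        ((k:ℝ) ^ (-(1 / 4 : ℝ)) * ((k + 1 : ℕ) : ℝ) ^ (-(1 / 4 : ℝ))) := by ring
    _ ≤ Real.exp (δ.re * Real.sqrt (k + 1 : ℕ)) * Real.exp ((-δ).re * Real.sqrt k) *
        ((k:ℝ) ^ (-(1 / 4 : ℝ)) * ((k + 1 : ℕ) : ℝ) ^ (-(1 / 4 : ℝ))) := by gcongr
    _ = _ := by ring

/-- One backward step of variation of parameters. With `F = wkb δ`, `G = wkb (-δ)` and `X = a F +
b G`, the vector `v_k = (a_k F_k / G_k, b_k)` satisfies `v_k = stepMap κ x y v_{k+1}`, where `κ`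
is the quotient of `F_k / G_k` by `F_{k+1} / G_{k+1}`, and `x`, `y` are the residuals of `F` and
`G` divided by `cP` times the scaled Casoratian `F_k / F_{k+1} - G_k / G_{k+1}`. -/
noncomputable def stepMap (κ x y : ℂ) : ℂ × ℂ →L[ℂ] ℂ × ℂ :=
  ((κ * (1 - x)) • ContinuousLinearMap.fst ℂ ℂ ℂ
    - (κ * y) • ContinuousLinearMap.snd ℂ ℂ ℂ).prod
  (x • ContinuousLinearMap.fst ℂ ℂ ℂ + (1 + y) • ContinuousLinearMap.snd ℂ ℂ ℂ)

lemma stepMap_apply (κ x y : ℂ) (v : ℂ × ℂ) : stepMap κ x y v =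
    (κ * (v.1 - (x * v.1 + y * v.2)), v.2 + (x * v.1 + y * v.2)) := by
  simp only [stepMap, ContinuousLinearMap.prod_apply, sub_apply, add_apply,
    smul_apply, ContinuousLinearMap.coe_fst', ContinuousLinearMap.coe_snd', smul_eq_mul]
  ext
  · simp only; ring
  · simp only; ring

lemma stepMap_norm {κ x y : ℂ} (hκ : ‖κ‖ ≤ 1) : ‖stepMap κ x y‖ ≤ 1 + (‖x‖ + ‖y‖) := by
  refine ContinuousLinearMap.opNorm_le_bound _ (by positivity) fun v => ?_
  rw [stepMap_apply]
  have h1 : ‖v.1‖ ≤ ‖v‖ := norm_fst_le v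
  have h2 : ‖v.2‖ ≤ ‖v‖ := norm_snd_le v
  have h3 : ‖x * v.1 + y * v.2‖ ≤ (‖x‖ + ‖y‖) * ‖v‖ := by
    refine (norm_add_le _ _).trans ?_
    rw [norm_mul, norm_mul, add_mul]
    gcongr
  rw [Prod.norm_def]
  refine max_le ?_ ?_
  · simp only [norm_mul]
    calc _ ≤ 1 * ‖v.1 - (x * v.1 + y * v.2)‖ := by gcongr
      _ ≤ ‖v.1‖ + ‖x * v.1 + y * v.2‖ := by rw [one_mul]; exact norm_sub_le _ _
      _ ≤ _ := by linarith
  · refine (norm_add_le _ _).trans ?_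
    linarith

lemma stepMap_fix {κ x y : ℂ} (hκ : ‖κ‖ ≤ 1) : ‖stepMap κ x y (0, 1) - (0, 1)‖ ≤ ‖y‖ := by
  rw [stepMap_apply, Prod.norm_def]
  refine max_le ?_ ?_
  · simp only [mul_zero, mul_one, zero_add, zero_sub, Prod.fst_sub, sub_zero, norm_mul, norm_neg]
    nlinarith [norm_nonneg y]
  · simp

/-- For `Re δ ≥ 0`, the solution with the asymptotics of `wkb (-δ)`. The residuals are `O(k⁻²)`
and the Casoratian of `wkb δ` and `wkb (-δ)` is of relative order `k^{-1/2}`, so that the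
perturbation of variation of parameters is `O(k^{-3/2})`. Since `|wkb (-δ) / wkb δ|` is
nonincreasing, the backward step is nearly a contraction and `exists_backward` applies. When `Re δ
= 0` this covers both signs of `δ`. -/
lemma exists_recessive {p q l δ : ℂ} (hpq : p + q = 1) (hpq0 : p * q ≠ 0)
    (hδ : p * q * δ ^ 2 = 2 * (1 - 2 * l)) (hδ0 : δ ≠ 0) (hre : 0 ≤ δ.re) :
    ∃ z : ℕ → ℂ, ∃ N, ∃ B : ℝ, (∀ k ≥ N, XRec p q l (fun k => wkb (-δ) k * z k) k) ∧
      ∀ k ≥ N, ‖z k - 1‖ ≤ B * iv k := by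
  have hδ' : p * q * (-δ) ^ 2 = 2 * (1 - 2 * l) := by rw [neg_sq]; exact hδ
  have hp0 : (2 * p * q) ≠ 0 := by rw [mul_assoc]; exact mul_ne_zero two_ne_zero hpq0
  have jF := jet_wkbRatio δ (-1) (by norm_num)
  have jG := jet_wkbRatio (-δ) (-1) (by norm_num)
  have jD : Jet (fun s => wkbRatio δ (-1) s - wkbRatio (-δ) (-1) s) 0 (-δ) 0
      (-δ / 2 - δ ^ 3 / 24) :=
    ((jF.add (jG.mul (Jet.poly (-1) 0 0 0))).cast (by ring) (by push_cast; ring)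
      (by push_cast; ring) (by push_cast; ring)).congr (Eventually.of_forall fun s => by ring)
  set RF : ℝ → ℂ := fun s => cP p q l s * wkbRatio δ (-1) s + cQ p q l s
    + cR p q l s * wkbRatio δ 1 s with hRF
  set RG : ℝ → ℂ := fun s => cP p q l s * wkbRatio (-δ) (-1) s + cQ p q l s
    + cR p q l s * wkbRatio (-δ) 1 s with hRG
  obtain ⟨CF, hCF, bF⟩ := (jet_residual hpq hδ).bound_four
  obtain ⟨CG, hCG, bG⟩ := (jet_residual hpq hδ').bound_four
  have lP := (jet_cP p q l).lower_zero hp0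
  have lD := jD.lower_one (neg_ne_zero.2 hδ0)
  obtain ⟨N₀, hN₀⟩ := eventually_atTop.1 (bF.and (bG.and (lP.and lD)))
  set N := max N₀ 1 with hN
  have hN1 : 1 ≤ N := le_max_right _ _
  set D : ℕ → ℂ := fun k => wkbRatio δ (-1) (iv (k + 1)) - wkbRatio (-δ) (-1) (iv (k + 1)) with hD
  set P : ℕ → ℂ := fun k => cP p q l (iv (k + 1)) with hP
  have hd : 0 < ‖-δ‖ := norm_pos_iff.2 (neg_ne_zero.2 hδ0)
  have hpp : 0 < ‖2 * p * q‖ := norm_pos_iff.2 hp0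
  have hP0 : ∀ k ≥ N, P k ≠ 0 := by
    intro k hk h0
    have := (hN₀ k ((le_max_left _ _).trans hk)).2.2.1
    simp only [hP] at h0
    rw [h0, norm_zero] at this
    linarith
  have hD0 : ∀ k ≥ N, D k ≠ 0 := by
    intro k hk h0
    have := (hN₀ k ((le_max_left _ _).trans hk)).2.2.2
    simp only [hD] at h0
    rw [h0, norm_zero] at this
    have h2 := iv_pos (show 1 ≤ k + 1 by omega)
    nlinarith [mul_pos hd h2]
  set x : ℕ → ℂ := fun k => RF (iv (k + 1)) / (P k * D k) with hx
  set y : ℕ → ℂ := fun k => RG (iv (k + 1)) / (P k * D k) with hy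
  set κ : ℕ → ℂ := fun k => wkbRatio δ (-1) (iv (k + 1)) / wkbRatio (-δ) (-1) (iv (k + 1)) with hκ
  have hquot : ∀ (R : ℂ) (C : ℝ) (k : ℕ), k ≥ N → 0 < C → ‖R‖ ≤ C * iv (k + 1) ^ 4 →
      ‖R / (P k * D k)‖ ≤ 16 * C / (‖2 * p * q‖ * ‖-δ‖) * (iv k - iv (k + 1)) := by
    intro R C k hk hC hR
    have h1 := (hN₀ k ((le_max_left _ _).trans hk)).2.2.1
    have h2 := (hN₀ k ((le_max_left _ _).trans hk)).2.2.2
    have h3 := iv_pos (show 1 ≤ k + 1 by omega)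
    have h4 := iv_cube_le (hN1.trans hk)
    have h5 : iv (k + 1) ^ 3 ≤ iv k ^ 3 := by
      have := iv_succ_le (hN1.trans hk); gcongr
    rw [norm_div, norm_mul]
    calc ‖R‖ / (‖P k‖ * ‖D k‖) ≤ C * iv (k + 1) ^ 4 /
          (‖2 * p * q‖ / 2 * (‖-δ‖ / 2 * iv (k + 1))) := by gcongr
      _ = 4 * C / (‖2 * p * q‖ * ‖-δ‖) * iv (k + 1) ^ 3 := by field_simp; ring
      _ ≤ 4 * C / (‖2 * p * q‖ * ‖-δ‖) * (4 * (iv k - iv (k + 1))) := by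
          gcongr; exact h5.trans h4
      _ = _ := by ring
  have hxb : ∀ k ≥ N, ‖x k‖ ≤ 16 * CF / (‖2 * p * q‖ * ‖-δ‖) * (iv k - iv (k + 1)) :=
    fun k hk => hquot _ _ k hk hCF (hN₀ k ((le_max_left _ _).trans hk)).1
  have hyb : ∀ k ≥ N, ‖y k‖ ≤ 16 * CG / (‖2 * p * q‖ * ‖-δ‖) * (iv k - iv (k + 1)) :=
    fun k hk => hquot _ _ k hk hCG (hN₀ k ((le_max_left _ _).trans hk)).2.1
  have hwk : ∀ (δ : ℂ) (k : ℕ), 1 ≤ k → wkb δ k ≠ 0 := fun δ k hk =>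
    wkb_ne_zero δ (by exact_mod_cast hk)
  have hκb : ∀ k ≥ N, ‖κ k‖ ≤ 1 := by
    intro k hk
    have h1 := norm_wkb_mul_le hre (hN1.trans hk)
    have a1 := norm_pos_iff.2 (hwk δ (k + 1) (by omega))
    have a2 := norm_pos_iff.2 (hwk (-δ) (k + 1) (by omega))
    have a3 := hwk (-δ) k (hN1.trans hk)
    rw [wkb_prev δ (hN1.trans hk), wkb_prev (-δ) (hN1.trans hk), norm_mul, norm_mul] at h1
    rw [wkb_prev (-δ) (hN1.trans hk)] at a3
    have a4 := norm_pos_iff.2 (right_ne_zero_of_mul a3)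
    simp only [hκ]
    rw [norm_div, div_le_one a4]
    have := mul_pos a1 a2
    refine le_of_mul_le_mul_left ?_ this
    linarith
  set CT := 16 * CF / (‖2 * p * q‖ * ‖-δ‖) + 16 * CG / (‖2 * p * q‖ * ‖-δ‖) with hCT
  have hdiff : ∀ k ≥ N, 0 ≤ iv k - iv (k + 1) := fun k hk =>
    sub_nonneg.2 (iv_succ_le (hN1.trans hk))
  obtain ⟨z, hz, B, hB⟩ := exists_backward (fun k => stepMap (κ k) (x k) (y k)) (0, 1) CT
    (by positivity) N hN1
    (fun k hk => (stepMap_norm (hκb k hk)).trans (by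
      have := hxb k hk; have := hyb k hk; rw [hCT, add_mul]; linarith))
    (fun k hk => (stepMap_fix (hκb k hk)).trans (by
      have := hyb k hk
      have h2 := (norm_nonneg _).trans (hxb k hk)
      rw [hCT, add_mul]; linarith))
  refine ⟨fun k => (z k).1 + (z k).2, N, 2 * B, ?_, ?_⟩
  · intro k hk
    have hk1 : 1 ≤ k := hN1.trans hk
    have e0 := hz k hk
    have e1 := hz (k + 1) (by omega)
    simp only [stepMap_apply] at e0 e1
    have e0a := congrArg Prod.fst e0
    have e0b := congrArg Prod.snd e0
    have e1a := congrArg Prod.fst e1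
    have e1b := congrArg Prod.snd e1
    simp only at e0a e0b e1a e1b
    rw [show k + 1 + 1 = k + 2 by ring] at e1a e1b
    have gG0 : wkbRatio (-δ) (-1) (iv (k + 1)) ≠ 0 := by
      have a3 := hwk (-δ) k hk1
      rw [wkb_prev (-δ) hk1] at a3
      exact right_ne_zero_of_mul a3
    have hF2 := hwk δ (k + 2) (by omega)
    have hG2 := hwk (-δ) (k + 2) (by omega)
    have hF1 := hwk δ (k + 1) (by omega)
    have hG1 := hwk (-δ) (k + 1) (by omega)
    have fF0 : wkbRatio δ 1 (iv (k + 1)) ≠ 0 := by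
      rw [wkb_next] at hF2; exact right_ne_zero_of_mul hF2
    -- the quotient of backward ratios at `k + 1` is the inverse quotient of forward ratios at `k`
    have hκ1 : wkbRatio δ 1 (iv (k + 1)) * κ (k + 1) = wkbRatio (-δ) 1 (iv (k + 1)) := by
      have b1 := wkb_prev δ (k := k + 1) (by omega)
      have b2 := wkb_prev (-δ) (k := k + 1) (by omega)
      rw [show k + 1 + 1 = k + 2 by ring] at b1 b2
      have b3 := wkb_next δ k
      have b4 := wkb_next (-δ) k
      have c1 : wkbRatio δ (-1) (iv (k + 2)) = wkb δ (k + 1 : ℕ) / wkb δ (k + 2 : ℕ) := by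
        rw [b1]; field_simp
      have c2 : wkbRatio (-δ) (-1) (iv (k + 2)) = wkb (-δ) (k + 1 : ℕ) / wkb (-δ) (k + 2 : ℕ) := by
        rw [b2]; field_simp
      have c3 : wkbRatio δ 1 (iv (k + 1)) = wkb δ (k + 2 : ℕ) / wkb δ (k + 1 : ℕ) := by
        rw [b3]; field_simp
      have c4 : wkbRatio (-δ) 1 (iv (k + 1)) = wkb (-δ) (k + 2 : ℕ) / wkb (-δ) (k + 1 : ℕ) := by
        rw [b4]; field_simp
      simp only [hκ]
      rw [show k + 1 + 1 = k + 2 by ring, c1, c2, c3, c4]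
      field_simp
    have hP0' := hP0 k hk
    have hD0' := hD0 k hk
    have hκ0 : κ k * wkbRatio (-δ) (-1) (iv (k + 1)) = wkbRatio δ (-1) (iv (k + 1)) := by
      simp only [hκ]; field_simp
    have hDdef : D k = wkbRatio δ (-1) (iv (k + 1)) - wkbRatio (-δ) (-1) (iv (k + 1)) := rfl
    have hxk : P k * x k * D k = RF (iv (k + 1)) := by simp only [hx]; field_simp
    have hyk : P k * y k * D k = RG (iv (k + 1)) := by simp only [hy]; field_simp
    have hPk : cP p q l (iv (k + 1)) = P k := rfl
    unfold XRec
    simp only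
    rw [wkb_prev (-δ) hk1, wkb_next]
    simp only [hRF, hRG] at hxk hyk
    rw [hPk] at *
    generalize wkb (-δ) (k + 1 : ℕ) = g at *
    generalize wkbRatio (-δ) (-1) (iv (k + 1)) = gG at *
    generalize wkbRatio δ (-1) (iv (k + 1)) = gF at *
    generalize wkbRatio (-δ) 1 (iv (k + 1)) = fG at *
    generalize wkbRatio δ 1 (iv (k + 1)) = fF at *
    generalize cQ p q l (iv (k + 1)) = Q at *
    generalize cR p q l (iv (k + 1)) = R at *
    generalize P k = Pk at *
    generalize D k = Dk at *
    generalize x k = xk at *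
    generalize y k = yk at *
    generalize κ k = κk at *
    generalize κ (k + 1) = κ1 at *
    -- the value at `k + 2` and the value at `k`, both in terms of the vector at `k + 1`
    have E2 : fG * ((z (k + 2)).1 + (z (k + 2)).2) = fF * (z (k + 1)).1 + fG * (z (k + 1)).2 := by
      rw [e1a, e1b, ← hκ1]; ring
    have E0 : gG * ((z k).1 + (z k).2) = gF * (z (k + 1)).1 + gG * (z (k + 1)).2
        - Dk * (xk * (z (k + 1)).1 + yk * (z (k + 1)).2) := by
      rw [e0a, e0b, hDdef, ← hκ0]; ring
    linear_combination Pk * g * E0 + R * g * E2 - g * (z (k + 1)).1 * hxk - g * (z (k + 1)).2 * hyk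
  · intro k hk
    have h1 := hB k hk
    have h2 := norm_fst_le (z k - (0, 1))
    have h3 := norm_snd_le (z k - (0, 1))
    simp only [Prod.fst_sub, Prod.snd_sub, sub_zero] at h2 h3
    calc ‖(z k).1 + (z k).2 - 1‖ = ‖(z k).1 + ((z k).2 - 1)‖ := by ring_nf
      _ ≤ _ := norm_add_le _ _
      _ ≤ _ := by linarith

/-- For real `d > 0`, the growing solution. Writing `X = wkb d * z`, the increments of `z` are
multiplied by `1 - d k^{-1/2} + O(k⁻¹)` at each step, and `exists_forward` applies. -/
lemma exists_dominant {p q l : ℂ} {d : ℝ} (hpq : p + q = 1) (hpq0 : p * q ≠ 0)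
    (hδ : p * q * (d : ℂ) ^ 2 = 2 * (1 - 2 * l)) (hd : 0 < d) :
    ∃ z : ℕ → ℂ, ∃ N, ∃ B : ℝ, (∀ k ≥ N, XRec p q l (fun k => wkb d k * z k) k) ∧
      ∀ k ≥ N, ‖z k - 1‖ ≤ B * iv k := by
  have hp0 : (2 * p * q) ≠ 0 := by rw [mul_assoc]; exact mul_ne_zero two_ne_zero hpq0
  have jg := jet_wkbRatio d (-1) (by norm_num)
  have jf := jet_wkbRatio d 1 (by norm_num)
  have jPg := (jet_cP p q l).mul jg
  have jRf := (jet_cR p q l).mul jf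
  -- `P E(k)/E(k+1) - (1 - d s) R E(k+2)/E(k+1)` vanishes to second order in `s`
  have jτ := jPg.add (jRf.mul (Jet.poly (-1) d 0 0))
  obtain ⟨C₁, hC₁, b₁⟩ := jτ.bound_two
  obtain ⟨C₂, hC₂, b₂⟩ := (jet_residual hpq hδ).bound_four
  have lR := jRf.lower_zero (by simpa using hp0)
  have hpp : 0 < ‖2 * p * q‖ := norm_pos_iff.2 hp0
  have e1 : ∀ᶠ k : ℕ in atTop, d * iv (k + 1) < 1 := by
    have := iv_succ_tendsto.const_mul d
    exact this.eventually (gt_mem_nhds (by simp))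
  have e2 : ∀ᶠ k : ℕ in atTop, 2 * C₁ / ‖2 * p * q‖ * iv (k + 1) < d / 2 := by
    have := iv_succ_tendsto.const_mul (2 * C₁ / ‖2 * p * q‖)
    exact this.eventually (gt_mem_nhds (by simpa using hd))
  obtain ⟨N₀, hN₀⟩ := eventually_atTop.1 (b₁.and (b₂.and (lR.and (e1.and e2))))
  set N := max N₀ 1 with hN
  have hN1 : 1 ≤ N := le_max_right _ _
  have hNN : N₀ ≤ N := le_max_left _ _
  set S : ℕ → ℂ := fun k => cR p q l (iv (k + 1)) * wkbRatio d 1 (iv (k + 1)) with hS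
  have hSlow : ∀ k ≥ N, ‖2 * p * q‖ / 2 ≤ ‖S k‖ := by
    intro k hk
    have := (hN₀ k (hNN.trans hk)).2.2.1
    rwa [mul_one] at this
  have hS0 : ∀ k ≥ N, S k ≠ 0 := fun k hk => norm_pos_iff.1 (by linarith [hSlow k hk])
  obtain ⟨z, N₁, B, hz, hB⟩ := exists_forward
    (fun k => cP p q l (iv (k + 1)) * wkbRatio d (-1) (iv (k + 1)) / S k)
    (fun k => (cP p q l (iv (k + 1)) * wkbRatio d (-1) (iv (k + 1)) + cQ p q l (iv (k + 1))
      + cR p q l (iv (k + 1)) * wkbRatio d 1 (iv (k + 1))) / S k)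
    (d / 4) (2 * C₂ / ‖2 * p * q‖) (by positivity) (by positivity) N
    (by
      intro k hk
      obtain ⟨h1, -, -, h4, h5⟩ := hN₀ k (hNN.trans hk)
      have h3 := hSlow k hk
      have h6 := hS0 k hk
      have hs := iv_pos (show 1 ≤ k + 1 by omega)
      have hsq := iv_sq_le (hN1.trans hk)
      have hsk : iv k ≤ 2 * iv (k + 1) := by
        have := iv_nonneg k
        nlinarith
      set s := iv (k + 1)
      set Pg := cP p q l s * wkbRatio d (-1) s
      have hdec : Pg / S k = ((1 - d * s : ℝ) : ℂ)
          + (Pg + S k * (-1 + d * s + 0 * s ^ 2 + 0 * s ^ 3)) / S k := by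
        field_simp; push_cast; ring
      rw [hdec]
      refine (norm_add_le _ _).trans ?_
      rw [Complex.norm_real, Real.norm_of_nonneg (by linarith), norm_div]
      have h7 : ‖Pg + S k * (-1 + d * s + 0 * s ^ 2 + 0 * s ^ 3)‖ ≤ C₁ * s ^ 2 := by
        refine le_trans (le_of_eq ?_) h1
        congr 1
        simp only [S, Pg, s]
        push_cast
        ring
      have h8 : ‖Pg + S k * (-1 + d * s + 0 * s ^ 2 + 0 * s ^ 3)‖ / ‖S k‖ ≤ d / 2 * s := by
        calc _ ≤ C₁ * s ^ 2 / (‖2 * p * q‖ / 2) := by gcongr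
          _ = 2 * C₁ / ‖2 * p * q‖ * s * s := by field_simp
          _ ≤ _ := by gcongr
      have : d / 4 * iv k ≤ d / 4 * (2 * s) := by gcongr
      linarith)
    (by
      intro k hk
      obtain ⟨-, h2, -, -, -⟩ := hN₀ k (hNN.trans hk)
      have h3 := hSlow k hk
      have hs := iv_pos (show 1 ≤ k + 1 by omega)
      have hs' := iv_succ_le (hN1.trans hk)
      rw [norm_div]
      calc _ ≤ C₂ * iv (k + 1) ^ 4 / (‖2 * p * q‖ / 2) := by gcongr
        _ = 2 * C₂ / ‖2 * p * q‖ * iv (k + 1) ^ 4 := by field_simp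
        _ ≤ _ := by gcongr)
  refine ⟨z, max N N₁, B, fun k hk => ?_, fun k hk => hB k ((le_max_right _ _).trans hk)⟩
  have hkN : N ≤ k := (le_max_left _ _).trans hk
  have h1 := hz k ((le_max_right _ _).trans hk)
  have h6 := hS0 k hkN
  have hSd : cR p q l (iv (k + 1)) * wkbRatio d 1 (iv (k + 1)) = S k := rfl
  unfold XRec
  simp only
  rw [wkb_prev d (hN1.trans hkN), wkb_next]
  simp only [hSd] at h1
  have h2 : S k * z (k + 2) = S k * z (k + 1) + S k * (z (k + 2) - z (k + 1)) := by ring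
  rw [h1] at h2
  field_simp at h2
  linear_combination (wkb d (k + 1 : ℕ)) * h2 + wkb d (k + 1 : ℕ) * z (k + 2) * hSd

/-! ### From the scalar recurrence to the three-term recurrence -/

/-- The normalised even-indexed part: `Y_k` with `u_{2k} = -β α^k Y_k`, expressed through
`X_k = α^{-k} u_{2k-1}` and `X_{k+1}` by the recurrence centred at `2 k`. -/
noncomputable def evenPart (p q l : ℂ) (X : ℕ → ℂ) (k : ℕ) : ℂ :=
  (p * (2 * k - 1) * X k + 2 * k * q * X (k + 1)) / (2 * k - l)

/-- `XRec` is the recurrence centred at `2 k + 1`, after elimination of the even-indexed part. -/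
lemma evenPart_rec {p q l : ℂ} {X : ℕ → ℂ} {k : ℕ} (h : XRec p q l X k)
    (h0 : (2 * k - l : ℂ) ≠ 0) (_h1 : (2 * k + 2 - l : ℂ) ≠ 0) :
    2 * k * q * evenPart p q l X k + p * (2 * k + 1) * evenPart p q l X (k + 1)
      = (2 * k + 1 - l) * X (k + 1) := by
  have hk : ((k : ℂ) + 1) ≠ 0 := by exact_mod_cast Nat.succ_ne_zero k
  have hs : ((iv (k + 1) : ℝ) : ℂ) ^ 2 = 1 / ((k : ℂ) + 1) := by
    have := iv_sq (k + 1)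
    rw [← Complex.ofReal_pow, this]; push_cast; rfl
  unfold XRec cP cQ cR at h
  rw [hs] at h
  have e1 : (2 - (2 + l) * (1 / ((k : ℂ) + 1)))⁻¹ = (k + 1) / (2 * k - l) := by
    rw [← inv_div (2 * (k : ℂ) - l) (k + 1)]; congr 1; field_simp; ring
  have e2 : (2 - l * (1 / ((k : ℂ) + 1)))⁻¹ = (k + 1) / (2 * k + 2 - l) := by
    rw [← inv_div (2 * (k : ℂ) + 2 - l) (k + 1)]; congr 1; field_simp
  rw [e1, e2] at h
  unfold evenPart
  push_cast
  rw [show (2 * ((k : ℂ) + 1) - l) = 2 * k + 2 - l by ring, show k + 1 + 1 = k + 2 by ring]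
  field_simp at h ⊢
  linear_combination h

/-- The three-term recurrence centred at `m + 1`, with `2`-periodic weights and for sequences
indexed by `ℕ` (so the value at `0` is irrelevant for `m ≥ 1`). -/
def URec (c₁ c₂ l : ℂ) (U : ℕ → ℂ) (m : ℕ) : Prop :=
  (if Odd m then c₁ else c₂) * m * U m + (m + 1 - l) * U (m + 1)
    + (if Odd (m + 1) then c₁ else c₂) * (m + 1) * U (m + 2) = 0

/-- Since the coefficient of the lowest term never vanishes, a solution of the recurrence near
infinity extends back to a solution on all of `ℕ₊`. -/
lemma exists_extension {c₁ c₂ l : ℂ} (h₁ : c₁ ≠ 0) (h₂ : c₂ ≠ 0) (N : ℕ) :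
    ∀ v : ℕ → ℂ, (∀ m ≥ N, URec c₁ c₂ l v m) →
      ∃ U : ℕ → ℂ, (∀ m ≥ 1, URec c₁ c₂ l U m) ∧ ∀ n ≥ N, U n = v n := by
  induction N with
  | zero => exact fun v hv => ⟨v, fun m _ => hv m (Nat.zero_le _), fun _ _ => rfl⟩
  | succ N ih =>
    intro v hv
    rcases Nat.eq_zero_or_pos N with rfl | hN
    · exact ⟨v, hv, fun _ _ => rfl⟩
    have hN0 : (N : ℂ) ≠ 0 := by exact_mod_cast hN.ne'
    have hc : (if Odd N then c₁ else c₂) ≠ 0 := by split_ifs <;> assumption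
    obtain ⟨U, hU1, hU2⟩ := ih (Function.update v N (-((N + 1 - l) * v (N + 1)
      + (if Odd (N + 1) then c₁ else c₂) * (N + 1) * v (N + 2)) /
        ((if Odd N then c₁ else c₂) * N))) (by
      intro m hm
      rcases hm.eq_or_lt with rfl | hlt
      · unfold URec
        rw [Function.update_self, Function.update_of_ne (by omega),
          Function.update_of_ne (by omega)]
        field_simp
        ring
      · unfold URec
        rw [Function.update_of_ne (by omega), Function.update_of_ne (by omega),
          Function.update_of_ne (by omega)]
        exact hv m hlt)
    refine ⟨U, hU1, fun n hn => ?_⟩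
    rw [hU2 n (by omega), Function.update_of_ne (by omega)]

lemma wkb_quot_bound (δ : ℂ) :
    (fun k : ℕ => wkb δ (k + 1 : ℕ) / wkb δ k - 1) =O[atTop] iv := by
  have h1 := ((jet_wkbRatio δ 1 (by norm_num)).order_two).comp_tendsto iv_tendsto
  have h2 : (fun k => iv k ^ 2) =O[atTop] iv := by
    refine IsBigO.of_bound 1 (eventually_atTop.2 ⟨1, fun k hk => ?_⟩)
    have h3 : iv k ≤ 1 := by
      unfold iv
      rw [div_le_one (by positivity)]
      exact Real.one_le_sqrt.2 (by exact_mod_cast hk)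
    have := iv_nonneg k
    rw [Real.norm_of_nonneg (by positivity), Real.norm_of_nonneg this]
    nlinarith
  have h3 : (fun k => δ * ((1 : ℝ) : ℂ) / 2 * (iv k : ℂ)) =O[atTop] iv :=
    IsBigO.const_mul_left (IsBigO.of_bound 1 (by simp)) _
  refine ((h1.trans h2).add h3).congr' (eventually_atTop.2 ⟨1, fun k hk => ?_⟩) EventuallyEq.rfl
  have h4 : (0:ℝ) < k := by exact_mod_cast hk
  have h5 := wkb_add δ (x := k) (u := 1) h4 (by positivity)
  rw [show (k:ℝ) + 1 = (k + 1 : ℕ) by push_cast; ring] at h5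
  beta_reduce
  rw [h5, mul_div_cancel_left₀ _ (wkb_ne_zero δ h4)]
  simp only [Function.comp, iv]
  ring

/-- The even-indexed part has the same asymptotics as the odd-indexed one, because `p + q = 1`. -/
lemma evenPart_bound {p q l δ : ℂ} {z : ℕ → ℂ} (hpq : p + q = 1)
    (hz : (fun k => z k - 1) =O[atTop] iv) :
    (fun k => evenPart p q l (fun k => wkb δ k * z k) k / wkb δ k - 1) =O[atTop] iv := by
  have hz1 : (fun k => z (k + 1) - 1) =O[atTop] iv := by
    refine (hz.comp_tendsto (tendsto_add_atTop_nat 1)).trans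
      (IsBigO.of_bound 1 (eventually_atTop.2 ⟨1, fun k hk => ?_⟩))
    simp only [Function.comp, Real.norm_of_nonneg (iv_nonneg _), one_mul]
    exact iv_succ_le hk
  have hρ := wkb_quot_bound δ
  have hb : (fun k => z (k + 1)) =O[atTop] (fun _ => (1:ℝ)) := by
    have : Tendsto (fun k => z (k + 1) - 1 + 1) atTop (𝓝 (0 + 1)) :=
      (hz1.trans_tendsto iv_tendsto).add_const 1
    simp only [sub_add_cancel, zero_add] at this
    exact this.norm.isBoundedUnder_le.isBigO_one ℝ
  have hden : ∀ᶠ k : ℕ in atTop, (k : ℝ) ≤ ‖(2 * k - l : ℂ)‖ := by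
    filter_upwards [tendsto_natCast_atTop_atTop.eventually_ge_atTop ‖l‖] with k hk
    have := norm_sub_norm_le (2 * k : ℂ) l
    simp only [norm_mul, RCLike.norm_natCast, RCLike.norm_ofNat] at this
    linarith
  have hA : (fun k : ℕ => p * (2 * k - 1) / (2 * k - l)) =O[atTop] (fun _ => (1:ℝ)) := by
    refine IsBigO.of_bound (3 * ‖p‖) ?_
    filter_upwards [hden, eventually_ge_atTop 1] with k hk hk1
    have h1 : (1:ℝ) ≤ k := by exact_mod_cast hk1
    have h2 : ‖(2 * k - 1 : ℂ)‖ ≤ 3 * k := by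
      refine (norm_sub_le _ _).trans ?_
      simp only [norm_mul, RCLike.norm_natCast, RCLike.norm_ofNat, norm_one]
      linarith
    rw [norm_div, norm_mul, norm_one, mul_one, div_le_iff₀ (by linarith)]
    nlinarith [norm_nonneg p]
  have hB : (fun k : ℕ => 2 * k * q / (2 * k - l)) =O[atTop] (fun _ => (1:ℝ)) := by
    refine IsBigO.of_bound (2 * ‖q‖) ?_
    filter_upwards [hden, eventually_ge_atTop 1] with k hk hk1
    have h1 : (1:ℝ) ≤ k := by exact_mod_cast hk1
    rw [norm_div, norm_mul, norm_one, mul_one, div_le_iff₀ (by linarith)]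
    simp only [norm_mul, RCLike.norm_natCast, RCLike.norm_ofNat]
    nlinarith [norm_nonneg q]
  have hC : (fun k : ℕ => (l - p) / (2 * k - l)) =O[atTop] iv := by
    refine IsBigO.of_bound ‖l - p‖ ?_
    filter_upwards [hden, eventually_ge_atTop 1] with k hk hk1
    have h1 : (1:ℝ) ≤ k := by exact_mod_cast hk1
    have h2 : iv k * Real.sqrt k = 1 := by
      unfold iv; field_simp
    have h3 : Real.sqrt k ≤ k := Real.sqrt_le_iff.2 ⟨by linarith, by nlinarith⟩
    have h4 := iv_nonneg k
    rw [norm_div, Real.norm_of_nonneg h4, div_le_iff₀ (by linarith), mul_assoc]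
    have h5 : 1 ≤ iv k * ‖(2 * k - l : ℂ)‖ := by
      rw [← h2]; exact mul_le_mul_of_nonneg_left (h3.trans hk) h4
    nlinarith [norm_nonneg (l - p)]
  -- with `ρ = E(k+1)/E(k)`, the quantity equals
  -- `A (z_k - 1) + B ((ρ - 1) z_{k+1} + (z_{k+1} - 1)) + (A + B - 1)`
  have hρz := ((hρ.mul hb).congr_right (fun k => mul_one _)).add hz1
  have hsum := (((hA.mul hz).add (hB.mul hρz)).congr_right
    (g₂ := iv) (fun k => one_mul _)).add hC
  refine hsum.congr' ?_ EventuallyEq.rfl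
  filter_upwards [hden, eventually_ge_atTop 1] with k hk hk1
  have h1 : (0:ℝ) < k := by exact_mod_cast hk1
  have h2 : (2 * k - l : ℂ) ≠ 0 := norm_pos_iff.1 (h1.trans_le hk)
  have h3 := wkb_ne_zero δ h1
  have hp : p = 1 - q := by linear_combination hpq
  unfold evenPart
  field_simp
  rw [hp]
  ring

/-- The sequence `u` with `u_{2k-1} = α^k X_k` and `u_{2k} = -β α^k Y_k`. -/
def interlace (α β : ℂ) (X Y : ℕ → ℂ) (n : ℕ) : ℂ :=
  if Odd n then α ^ ((n + 1) / 2) * X ((n + 1) / 2) else -β * α ^ (n / 2) * Y (n / 2)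

lemma interlace_odd (α β : ℂ) (X Y : ℕ → ℂ) (k : ℕ) :
    interlace α β X Y (2 * k + 1) = α ^ (k + 1) * X (k + 1) := by
  unfold interlace
  rw [if_pos ⟨k, rfl⟩, show (2 * k + 1 + 1) / 2 = k + 1 by omega]

lemma interlace_even (α β : ℂ) (X Y : ℕ → ℂ) (k : ℕ) :
    interlace α β X Y (2 * k) = -β * α ^ k * Y k := by
  unfold interlace
  rw [if_neg (by simp), show 2 * k / 2 = k by omega]

/-- With `p = β c₁`, `q = β α c₂` and `α² = β² = 1`, solutions of the scalar recurrence `XRec` give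
solutions of the original one. -/
lemma uRec_interlace {c₁ c₂ l α β p q : ℂ} (hα : α ^ 2 = 1) (hβ : β ^ 2 = 1)
    (hp : p = β * c₁) (hq : q = β * α * c₂) (hl : ∀ n : ℕ, 1 ≤ n → (n - l : ℂ) ≠ 0)
    {X : ℕ → ℂ} {N : ℕ} (hX : ∀ k ≥ N, XRec p q l X k) (m : ℕ) (hm : 2 * N + 2 ≤ m) :
    URec c₁ c₂ l (interlace α β X (evenPart p q l X)) m := by
  have h1 : c₁ = β * p := by rw [hp]; linear_combination -c₁ * hβ
  have h2 : c₂ = β * α * q := by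
    rw [hq]; linear_combination (-c₂ * α ^ 2) * hβ - c₂ * hα
  have hden : ∀ k : ℕ, 1 ≤ k → (2 * k - l : ℂ) ≠ 0 := by
    intro k hk
    have := hl (2 * k) (by omega)
    push_cast at this
    exact this
  rcases Nat.even_or_odd' m with ⟨k, rfl | rfl⟩
  · have hr := evenPart_rec (hX k (by omega)) (hden k (by omega)) (by
      have := hden (k + 1) (by omega)
      push_cast at this
      rwa [mul_add, mul_one] at this)
    unfold URec
    rw [if_neg (by simp), if_pos ⟨k, rfl⟩, interlace_even, interlace_odd,
      show 2 * k + 2 = 2 * (k + 1) by ring, interlace_even, h1, h2]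
    push_cast
    linear_combination (-α ^ (k + 1)) * hr + (-α ^ (k + 1)
      * (2 * k * q * evenPart p q l X k + p * (2 * k + 1) * evenPart p q l X (k + 1))) * hβ
  · have hy : (2 * (k + 1 : ℕ) - l) * evenPart p q l X (k + 1)
        = p * (2 * (k + 1 : ℕ) - 1) * X (k + 1) + 2 * (k + 1 : ℕ) * q * X (k + 1 + 1) := by
      unfold evenPart
      rw [mul_div_cancel₀ _ (hden (k + 1) (by omega))]
    unfold URec
    rw [if_pos ⟨k, rfl⟩, if_neg (by simp [Nat.odd_add_one]),
      show 2 * k + 1 + 2 = 2 * (k + 1) + 1 by ring, interlace_odd, interlace_odd,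
      show 2 * k + 1 + 1 = 2 * (k + 1) by ring, interlace_even, h1, h2]
    push_cast at hy ⊢
    linear_combination (-β * α ^ (k + 1)) * hy
      + (β * α ^ (k + 1) * q * (2 * k + 2) * X (k + 1 + 1)) * hα

/-- A solution of `XRec` near infinity with WKB asymptotics yields a solution of the original
recurrence on all of `ℕ₊`, the error terms being defined by division at every index. -/
lemma exists_solution {c₁ c₂ l α β δ : ℂ} (hα : α ^ 2 = 1) (hβ : β ^ 2 = 1)
    (h₁ : c₁ ≠ 0) (h₂ : c₂ ≠ 0) (hl : ∀ n : ℕ, 1 ≤ n → (n - l : ℂ) ≠ 0)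
    (hpq : β * c₁ + β * α * c₂ = 1)
    (hz : ∃ z : ℕ → ℂ, ∃ N, ∃ B : ℝ,
      (∀ k ≥ N, XRec (β * c₁) (β * α * c₂) l (fun k => wkb δ k * z k) k) ∧
        ∀ k ≥ N, ‖z k - 1‖ ≤ B * iv k) :
    ∃ U r s : ℕ → ℂ, (∀ m ≥ 1, URec c₁ c₂ l U m) ∧
      (∀ k ≥ 1, U (2 * k - 1) = α ^ k * wkb δ k * (1 + r k)) ∧
      (∀ k ≥ 1, U (2 * k) = -β * α ^ k * wkb δ k * (1 + s k)) ∧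
      r =O[atTop] iv ∧ s =O[atTop] iv := by
  obtain ⟨z, N, B, hX, hB⟩ := hz
  have hzO : (fun k => z k - 1) =O[atTop] iv := by
    refine IsBigO.of_bound B (eventually_atTop.2 ⟨N, fun k hk => ?_⟩)
    rw [Real.norm_of_nonneg (iv_nonneg k)]
    exact hB k hk
  have hα0 : α ≠ 0 := by rintro rfl; norm_num at hα
  have hβ0 : β ≠ 0 := by rintro rfl; norm_num at hβ
  obtain ⟨U, hU, hUv⟩ := exists_extension h₁ h₂ (2 * N + 2) _
    (fun m hm => uRec_interlace hα hβ rfl rfl hl hX m hm)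
  have hY := evenPart_bound (l := l) (δ := δ) hpq hzO
  refine ⟨U, fun k => U (2 * k - 1) / (α ^ k * wkb δ k) - 1,
    fun k => U (2 * k) / (-β * α ^ k * wkb δ k) - 1, hU, fun k hk => ?_, fun k hk => ?_, ?_, ?_⟩
  · have := wkb_ne_zero δ (x := k) (by exact_mod_cast hk)
    field_simp
    ring
  · have := wkb_ne_zero δ (x := k) (by exact_mod_cast hk)
    field_simp
    ring
  · refine hzO.congr' (eventually_atTop.2 ⟨N + 2, fun k hk => ?_⟩) EventuallyEq.rfl
    have := wkb_ne_zero δ (x := k) (by exact_mod_cast (by omega : 0 < k))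
    obtain ⟨j, rfl⟩ : ∃ j, k = j + 1 := ⟨k - 1, by omega⟩
    beta_reduce
    rw [show 2 * (j + 1) - 1 = 2 * j + 1 by omega, hUv _ (by omega), interlace_odd]
    field_simp
  · refine hY.congr' (eventually_atTop.2 ⟨N + 2, fun k hk => ?_⟩) EventuallyEq.rfl
    have := wkb_ne_zero δ (x := k) (by exact_mod_cast (by omega : 0 < k))
    beta_reduce
    rw [hUv _ (by omega), interlace_even]
    field_simp

/-! ### Linear independence -/

/-- For `δ ≠ 0`, `exp (2 δ √k)` has no nonzero limit: along `k = a m²` its successive quotients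
equal `exp (2 δ √a)`, which would be `1` for both `a = 1` and `a = 2`, contradicting irrationality
of `√2`. -/
lemma no_limit {δ γ : ℂ} (hδ : δ ≠ 0) (hγ : γ ≠ 0)
    (h : Tendsto (fun k : ℕ => Complex.exp (2 * δ * (Real.sqrt k : ℂ))) atTop (𝓝 γ)) : False := by
  have key : ∀ a : ℕ, 1 ≤ a → Complex.exp (2 * δ * (Real.sqrt a : ℂ)) = 1 := by
    intro a ha
    have hq : Tendsto (fun m : ℕ => a * m ^ 2) atTop atTop :=
      tendsto_atTop_mono (fun m => (Nat.le_self_pow two_ne_zero m).trans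
        (Nat.le_mul_of_pos_left _ ha)) tendsto_id
    have h1 := h.comp hq
    have h2 := h1.comp (tendsto_add_atTop_nat 1)
    have h3 := h1.mul_const (Complex.exp (2 * δ * (Real.sqrt a : ℂ)))
    have h4 := tendsto_nhds_unique h2 (h3.congr (fun m => by
      simp only [Function.comp]
      rw [← Complex.exp_add]
      congr 1
      push_cast
      rw [Real.sqrt_mul (by positivity), Real.sqrt_mul (by positivity),
        Real.sqrt_sq (by positivity), Real.sqrt_sq (by positivity)]
      push_cast
      ring))
    exact mul_left_cancel₀ hγ (h4.symm.trans (mul_one γ).symm)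
  obtain ⟨n, hn⟩ := Complex.exp_eq_one_iff.1 (key 1 le_rfl)
  obtain ⟨m, hm⟩ := Complex.exp_eq_one_iff.1 (key 2 (by norm_num))
  simp only [Nat.cast_one, Real.sqrt_one, Complex.ofReal_one, mul_one, Nat.cast_ofNat] at hn hm
  have hpi : (2 * Real.pi * Complex.I : ℂ) ≠ 0 := Complex.two_pi_I_ne_zero
  have hn0 : (n : ℂ) ≠ 0 := by
    intro h0
    rw [h0, zero_mul] at hn
    exact hδ (by simpa using hn)
  rw [hn] at hm
  have h5 : (n : ℂ) * (Real.sqrt 2 : ℂ) = m :=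
    mul_right_cancel₀ hpi (by rw [← hm]; ring)
  have h6 : (n : ℝ) * Real.sqrt 2 = m := by exact_mod_cast h5
  have hn1 : (n : ℝ) ≠ 0 := by exact_mod_cast hn0
  exact irrational_sqrt_two ⟨(m : ℚ) / n, by push_cast; field_simp; linarith⟩

/-- Solutions with the asymptotics of `wkb δ` and `wkb (-δ)`, `δ ≠ 0`, are not proportional. The
case `γ = 0` is included. -/
lemma not_proportional {α δ γ : ℂ} {U V r r' : ℕ → ℂ} (hα : α ^ 2 = 1) (hδ : δ ≠ 0)
    (hU : ∀ k ≥ 1, U (2 * k - 1) = α ^ k * wkb δ k * (1 + r k))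
    (hV : ∀ k ≥ 1, V (2 * k - 1) = α ^ k * wkb (-δ) k * (1 + r' k))
    (hr : r =O[atTop] iv) (hr' : r' =O[atTop] iv) (h : ∀ n ≥ 1, U n = γ * V n) : False := by
  have hα0 : α ≠ 0 := by rintro rfl; norm_num at hα
  have e1 : Tendsto (fun k => 1 + r k) atTop (𝓝 1) := by
    simpa using (hr.trans_tendsto iv_tendsto).const_add 1
  have e2 : Tendsto (fun k => 1 + r' k) atTop (𝓝 1) := by
    simpa using (hr'.trans_tendsto iv_tendsto).const_add 1
  have e3 : ∀ k : ℕ, k ≥ 1 →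
      Complex.exp (2 * δ * (Real.sqrt k : ℂ)) * (1 + r k) = γ * (1 + r' k) := by
    intro k hk
    have h1 := h (2 * k - 1) (by omega)
    rw [hU k hk, hV k hk] at h1
    have h2 := wkb_ne_zero (-δ) (x := k) (by exact_mod_cast hk)
    have h3 : wkb δ k = Complex.exp (2 * δ * (Real.sqrt k : ℂ)) * wkb (-δ) k := by
      unfold wkb
      rw [← mul_assoc, ← Complex.exp_add]
      ring_nf
    rw [h3] at h1
    refine mul_left_cancel₀ (mul_ne_zero (pow_ne_zero k hα0) h2) ?_
    linear_combination h1
  have e4 : ∀ᶠ k in atTop, 1 + r k ≠ 0 := e1.eventually_ne one_ne_zero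
  have e5 : Tendsto (fun k : ℕ => Complex.exp (2 * δ * (Real.sqrt k : ℂ))) atTop (𝓝 γ) := by
    have := (e2.const_mul γ).div e1 one_ne_zero
    rw [mul_one, div_one] at this
    refine this.congr' ?_
    filter_upwards [e4, eventually_ge_atTop 1] with k hk hk1
    simp only [Pi.div_apply]
    rw [← e3 k hk1]
    field_simp
  refine no_limit hδ ?_ e5
  rintro rfl
  obtain ⟨k, hk, hk1⟩ := (e4.and (eventually_ge_atTop 1)).exists
  have := e3 k hk1
  rw [zero_mul] at this
  exact mul_ne_zero (Complex.exp_ne_zero _) hk this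

/-! ### Assembly of the two solutions -/

/-- The principal square root of a real number is either real and nonnegative or imaginary. -/
lemma sqrt_cases (x : ℝ) :
    ((x : ℂ) ^ ((1 : ℂ) / 2)) ^ 2 = x ∧
      ((∃ d : ℝ, 0 ≤ d ∧ (x : ℂ) ^ ((1 : ℂ) / 2) = d) ∨ ((x : ℂ) ^ ((1 : ℂ) / 2)).re = 0) := by
  have h2 : ((x : ℂ) ^ ((1 : ℂ) / 2)) ^ 2 = x := by
    rw [one_div]
    exact_mod_cast Complex.cpow_nat_inv_pow (x : ℂ) two_ne_zero
  refine ⟨h2, ?_⟩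
  rcases le_or_gt 0 x with hx | hx
  · refine Or.inl ⟨x ^ ((1:ℝ) / 2), by positivity, ?_⟩
    rw [Complex.ofReal_cpow hx]
    push_cast
    rfl
  · right
    set w := (x : ℂ) ^ ((1 : ℂ) / 2)
    have hre := congrArg Complex.re h2
    have him := congrArg Complex.im h2
    simp only [sq, Complex.mul_re, Complex.mul_im, Complex.ofReal_re, Complex.ofReal_im] at hre him
    have : w.re * w.im = 0 := by linarith
    rcases mul_eq_zero.1 this with h | h
    · exact h
    · rw [h] at hre
      nlinarith [mul_self_nonneg w.re]

/-- The pair of solutions. The one for `-δ` is always given by `exists_recessive`; the one for `δ`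
is given by `exists_dominant` if `δ > 0`, and by `exists_recessive` again if `Re δ = 0`. -/
lemma exists_pair {c₁ c₂ l α β δ : ℂ} (hα : α ^ 2 = 1) (hβ : β ^ 2 = 1)
    (h₁ : c₁ ≠ 0) (h₂ : c₂ ≠ 0) (hl : ∀ n : ℕ, 1 ≤ n → (n - l : ℂ) ≠ 0)
    (hpq : β * c₁ + β * α * c₂ = 1) (hδ : (β * c₁) * (β * α * c₂) * δ ^ 2 = 2 * (1 - 2 * l))
    (hδ0 : δ ≠ 0) (hcase : (∃ d : ℝ, 0 ≤ d ∧ δ = d) ∨ δ.re = 0) :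
    ∃ U V r r' s s' : ℕ → ℂ, (∀ m ≥ 1, URec c₁ c₂ l U m) ∧ (∀ m ≥ 1, URec c₁ c₂ l V m) ∧
      (∀ γ : ℂ, ¬ ∀ n ≥ 1, U n = γ * V n) ∧ (∀ γ : ℂ, ¬ ∀ n ≥ 1, V n = γ * U n) ∧
      (∀ k ≥ 1, U (2 * k - 1) = α ^ k * wkb δ k * (1 + r k)) ∧
      (∀ k ≥ 1, V (2 * k - 1) = α ^ k * wkb (-δ) k * (1 + r' k)) ∧
      (∀ k ≥ 1, U (2 * k) = -β * α ^ k * wkb δ k * (1 + s k)) ∧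
      (∀ k ≥ 1, V (2 * k) = -β * α ^ k * wkb (-δ) k * (1 + s' k)) ∧
      r =O[Filter.atTop] iv ∧ r' =O[Filter.atTop] iv ∧
      s =O[Filter.atTop] iv ∧ s' =O[Filter.atTop] iv := by
  have hα0 : α ≠ 0 := by rintro rfl; norm_num at hα
  have hβ0 : β ≠ 0 := by rintro rfl; norm_num at hβ
  have hpq0 : (β * c₁) * (β * α * c₂) ≠ 0 := by simp [*]
  have hre : 0 ≤ δ.re := by
    rcases hcase with ⟨d, hd, rfl⟩ | h
    · simpa using hd
    · exact h.ge
  have hplus : ∃ z : ℕ → ℂ, ∃ N, ∃ B : ℝ,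
      (∀ k ≥ N, XRec (β * c₁) (β * α * c₂) l (fun k => wkb δ k * z k) k) ∧
        ∀ k ≥ N, ‖z k - 1‖ ≤ B * iv k := by
    rcases hcase with ⟨d, hd, rfl⟩ | h
    · exact exists_dominant hpq hpq0 hδ (hd.lt_of_ne (by rintro rfl; simp at hδ0))
    · simpa using exists_recessive (δ := -δ) hpq hpq0 (by rwa [neg_sq]) (neg_ne_zero.2 hδ0)
        (by simp [h])
  obtain ⟨U, r, s, hU, hUo, hUe, hr, hs⟩ := exists_solution hα hβ h₁ h₂ hl hpq hplus
  obtain ⟨V, r', s', hV, hVo, hVe, hr', hs'⟩ := exists_solution hα hβ h₁ h₂ hl hpq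
    (exists_recessive hpq hpq0 hδ hδ0 hre)
  exact ⟨U, V, r, r', s, s', hU, hV, fun γ => not_proportional hα hδ0 hUo hVo hr hr',
    fun γ => not_proportional hα (neg_ne_zero.2 hδ0) hVo (by simpa using hUo) hr' hr,
    hUo, hVo, hUe, hVe, hr, hr', hs, hs'⟩

/-- `URec` for sequences on `ℕ` restricts to the recurrence on `ℕ₊`. -/
lemma pnat_rec {c₁ c₂ lam : ℝ} {c : ℕ+ → ℝ}
    (hodd : ∀ n : ℕ+, Odd (n : ℕ) → c n = c₁)
    (heven : ∀ n : ℕ+, Even (n : ℕ) → c n = c₂) {U : ℕ → ℂ}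
    (hU : ∀ m ≥ 1, URec c₁ c₂ lam U m) (n : ℕ+) (hn : 2 ≤ n) :
    ((c (n - 1) * (((n : ℕ) : ℝ) - 1) : ℝ) : ℂ) * U ((n - 1 : ℕ+) : ℕ)
      + (((((n : ℕ) : ℝ) - lam) : ℝ) : ℂ) * U (n : ℕ)
      + ((c n * ((n : ℕ) : ℝ) : ℝ) : ℂ) * U ((n + 1 : ℕ+) : ℕ) = 0 := by
  have hc : ∀ k : ℕ+, (if Odd (k : ℕ) then (c₁ : ℂ) else c₂) = c k := by
    intro k
    split_ifs with h
    · rw [hodd k h]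
    · rw [heven k (Nat.not_odd_iff_even.1 h)]
  obtain ⟨m, rfl⟩ : ∃ m : ℕ+, n = m + 1 := ⟨n - 1, (PNat.sub_add_of_lt
    (lt_of_lt_of_le (by decide) hn)).symm⟩
  have h := hU m m.pos
  unfold URec at h
  have hc1 := hc (m + 1)
  rw [PNat.add_coe, PNat.one_coe] at hc1
  rw [hc m, hc1] at h
  rw [show m + 1 - 1 = m from PNat.eq (by
    rw [PNat.sub_coe, if_pos (PNat.lt_add_left 1 m)]; simp)]
  simp only [PNat.add_coe, PNat.one_coe] at h ⊢
  push_cast at h ⊢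
  linear_combination h

end

/-- On the critical lines `|c₁² + c₂² − 1| = 2|c₁c₂|` (with
`c₁c₂ ≠ 0`), for `λ ≠ 1/2` not a positive integer, the three-term Jacobi recurrence
`c_{n−1}(n−1)u_{n−1} + (n − λ)uₙ + cₙ n u_{n+1} = 0` (`n ≥ 2`) has two linearly
independent solutions `u^±` with
`u^±_{2k−1} = α^k exp(δ_± √k) k^{−1/4}(1 + O(1/√k))` and
`u^±_{2k} = −(c₁ + αc₂) α^k exp(δ_± √k) k^{−1/4}(1 + O(1/√k))`,
where `a₀ = (c₁² + c₂² − 1)/(c₁c₂) = ±2`, `α = −a₀/2`,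
`δ₊ = 2√((2λ−1)/(2c₁c₂))` if `a₀ = 2`, `δ₊ = 2√((1−2λ)/(2c₁c₂))` if `a₀ = −2`
(principal complex square roots), and `δ₋ = −δ₊`. -/
theorem stmt_19 (c₁ c₂ : ℝ) (hne : c₁ * c₂ ≠ 0)
    (hcrit : |c₁ ^ 2 + c₂ ^ 2 - 1| = 2 * |c₁ * c₂|)
    (c : ℕ+ → ℝ)
    (hodd : ∀ n : ℕ+, Odd (n : ℕ) → c n = c₁)
    (heven : ∀ n : ℕ+, Even (n : ℕ) → c n = c₂)
    (lam : ℝ) (hhalf : lam ≠ 1 / 2) (hlam : ∀ n : ℕ+, lam ≠ ((n : ℕ) : ℝ))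
    (a₀ : ℝ) (ha₀ : a₀ = (c₁ ^ 2 + c₂ ^ 2 - 1) / (c₁ * c₂))
    (α : ℝ) (hα : α = -a₀ / 2)
    (δp δm : ℂ)
    (hδp2 : a₀ = 2 →
      δp = 2 * ((((2 * lam - 1) / (2 * c₁ * c₂) : ℝ) : ℂ) ^ ((1 : ℂ) / 2)))
    (hδpm2 : a₀ = -2 →
      δp = 2 * ((((1 - 2 * lam) / (2 * c₁ * c₂) : ℝ) : ℂ) ^ ((1 : ℂ) / 2)))
    (hδm : δm = -δp) :
    ∃ up um : ℕ+ → ℂ,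
      (∀ γ : ℂ, up ≠ γ • um) ∧ (∀ γ : ℂ, um ≠ γ • up) ∧
      (∀ n : ℕ+, 2 ≤ n →
        ((c (n - 1) * (((n : ℕ) : ℝ) - 1) : ℝ) : ℂ) * up (n - 1)
          + (((((n : ℕ) : ℝ) - lam) : ℝ) : ℂ) * up n
          + ((c n * ((n : ℕ) : ℝ) : ℝ) : ℂ) * up (n + 1) = 0) ∧
      (∀ n : ℕ+, 2 ≤ n →
        ((c (n - 1) * (((n : ℕ) : ℝ) - 1) : ℝ) : ℂ) * um (n - 1)
          + (((((n : ℕ) : ℝ) - lam) : ℝ) : ℂ) * um n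
          + ((c n * ((n : ℕ) : ℝ) : ℝ) : ℂ) * um (n + 1) = 0) ∧
      ∃ rp rm sp sm : ℕ+ → ℂ,
        (∀ k : ℕ+, up (2 * k - 1) = ((α : ℂ) ^ (k : ℕ))
          * Complex.exp (δp * (Real.sqrt ((k : ℕ) : ℝ) : ℂ))
          * ((((k : ℕ) : ℝ) ^ (-(1 / 4 : ℝ)) : ℝ) : ℂ) * (1 + rp k)) ∧
        (∀ k : ℕ+, um (2 * k - 1) = ((α : ℂ) ^ (k : ℕ))
          * Complex.exp (δm * (Real.sqrt ((k : ℕ) : ℝ) : ℂ))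
          * ((((k : ℕ) : ℝ) ^ (-(1 / 4 : ℝ)) : ℝ) : ℂ) * (1 + rm k)) ∧
        (∀ k : ℕ+, up (2 * k) = -(((c₁ : ℂ) + (α : ℂ) * (c₂ : ℂ)))
          * ((α : ℂ) ^ (k : ℕ))
          * Complex.exp (δp * (Real.sqrt ((k : ℕ) : ℝ) : ℂ))
          * ((((k : ℕ) : ℝ) ^ (-(1 / 4 : ℝ)) : ℝ) : ℂ) * (1 + sp k)) ∧
        (∀ k : ℕ+, um (2 * k) = -(((c₁ : ℂ) + (α : ℂ) * (c₂ : ℂ)))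
          * ((α : ℂ) ^ (k : ℕ))
          * Complex.exp (δm * (Real.sqrt ((k : ℕ) : ℝ) : ℂ))
          * ((((k : ℕ) : ℝ) ^ (-(1 / 4 : ℝ)) : ℝ) : ℂ) * (1 + sm k)) ∧
        (rp =O[Filter.atTop] fun k : ℕ+ => 1 / Real.sqrt ((k : ℕ) : ℝ)) ∧
        (rm =O[Filter.atTop] fun k : ℕ+ => 1 / Real.sqrt ((k : ℕ) : ℝ)) ∧
        (sp =O[Filter.atTop] fun k : ℕ+ => 1 / Real.sqrt ((k : ℕ) : ℝ)) ∧
        (sm =O[Filter.atTop] fun k : ℕ+ => 1 / Real.sqrt ((k : ℕ) : ℝ)) := by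
  have hc₁ : c₁ ≠ 0 := left_ne_zero_of_mul hne
  have hc₂ : c₂ ≠ 0 := right_ne_zero_of_mul hne
  have ha : a₀ = 2 ∨ a₀ = -2 := by
    refine abs_eq_abs.1 ?_
    rw [ha₀, abs_div, hcrit, abs_two]
    field_simp
  have hα2 : α ^ 2 = 1 := by rcases ha with h | h <;> rw [hα, h] <;> norm_num
  have ha₀' : c₁ ^ 2 + c₂ ^ 2 - 1 = -2 * α * (c₁ * c₂) := by
    rw [hα, ha₀]
    field_simp
  have hβ2 : (c₁ + α * c₂) ^ 2 = 1 := by linear_combination ha₀' + c₂ ^ 2 * hα2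
  -- `δ₊ = 2 √x` with `x = α (1 - 2λ) / (2 c₁ c₂)` in both cases
  have hδp : δp = 2 * (((α * (1 - 2 * lam) / (2 * c₁ * c₂) : ℝ) : ℂ) ^ ((1 : ℂ) / 2)) := by
    rcases ha with h | h
    · rw [hδp2 h, hα, h]
      norm_num
    · rw [hδpm2 h, hα, h]
      norm_num
  obtain ⟨hsq, hcase⟩ := sqrt_cases (α * (1 - 2 * lam) / (2 * c₁ * c₂))
  have hx : α * (1 - 2 * lam) / (2 * c₁ * c₂) ≠ 0 := by
    have h1 : α ≠ 0 := by rintro rfl; norm_num at hα2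
    have h2 : 1 - 2 * lam ≠ 0 := fun h => hhalf (by linarith)
    exact div_ne_zero (mul_ne_zero h1 h2) (mul_ne_zero (mul_ne_zero two_ne_zero hc₁) hc₂)
  have hδsq : δp ^ 2 = 4 * ((α * (1 - 2 * lam) / (2 * c₁ * c₂) : ℝ) : ℂ) := by
    rw [hδp, mul_pow, hsq]
    norm_num
  have hδ0 : δp ≠ 0 := by
    rintro h
    rw [h] at hδsq
    refine hx ?_
    have : ((α * (1 - 2 * lam) / (2 * c₁ * c₂) : ℝ) : ℂ) = 0 := by linear_combination -hδsq / 4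
    exact_mod_cast this
  have hα2' : (α : ℂ) ^ 2 = 1 := by exact_mod_cast hα2
  have hβ2' : ((c₁ : ℂ) + α * c₂) ^ 2 = 1 := by exact_mod_cast hβ2
  have hc₁' : (c₁ : ℂ) ≠ 0 := by exact_mod_cast hc₁
  have hc₂' : (c₂ : ℂ) ≠ 0 := by exact_mod_cast hc₂
  obtain ⟨U, V, r, r', s, s', hU, hV, hUV, hVU, hUo, hVo, hUe, hVe, hr, hr', hs, hs'⟩ :=
    exists_pair (l := lam) (δ := δp) hα2' hβ2' hc₁' hc₂'
      (fun n hn h => hlam ⟨n, hn⟩ (by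
        rw [sub_eq_zero] at h
        exact_mod_cast h.symm))
      (by linear_combination hβ2')
      (by
        rw [hδsq]
        push_cast
        field_simp
        linear_combination 4 * (1 - 2 * (lam : ℂ)) * (α : ℂ) ^ 2 * hβ2'
          + 4 * (1 - 2 * (lam : ℂ)) * hα2')
      hδ0 (by
        rcases hcase with ⟨d, hd, h⟩ | h
        · exact Or.inl ⟨2 * d, by positivity, by rw [hδp, h]; push_cast; ring⟩
        · exact Or.inr (by rw [hδp]; simp only [Complex.mul_re, h]; simp))
  have hpn : ∀ {f : ℕ → ℂ}, f =O[Filter.atTop] iv → (fun k : ℕ+ => f k) =O[Filter.atTop]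
      fun k : ℕ+ => 1 / Real.sqrt ((k : ℕ) : ℝ) :=
    fun hf => hf.comp_tendsto tendsto_PNat_val_atTop_atTop
  have h2k : ∀ k : ℕ+, ((2 * k - 1 : ℕ+) : ℕ) = 2 * (k : ℕ) - 1 := by
    intro k
    have h : (1 : ℕ+) < 2 * k := by
      rw [← PNat.coe_lt_coe, PNat.mul_coe]
      have := k.pos
      have h2 : ((2 : ℕ+) : ℕ) = 2 := rfl
      rw [h2, PNat.one_coe]
      omega
    rw [PNat.sub_coe, if_pos h]
    rfl
  refine ⟨fun n => U n, fun n => V n, fun γ h => hUV γ fun n hn => congrFun h ⟨n, hn⟩,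
    fun γ h => hVU γ fun n hn => congrFun h ⟨n, hn⟩, pnat_rec hodd heven hU,
    pnat_rec hodd heven hV, fun k => r k, fun k => r' k, fun k => s k, fun k => s' k,
    fun k => ?_, fun k => ?_, fun k => ?_, fun k => ?_, hpn hr, hpn hr', hpn hs, hpn hs'⟩
  · beta_reduce
    rw [h2k, hUo k k.pos, wkb]
    ring
  · beta_reduce
    rw [h2k, hVo k k.pos, wkb, hδm]
    ring
  · refine (hUe k k.pos).trans ?_
    rw [wkb]
    ring
  · refine (hVe k k.pos).trans ?_
    rw [wkb, hδm]
    ring
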